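/- arXiv:1812.10147 — 3 statements merged into one kernel-verified Lean document; each statement's English description precedes it below -/
import Mathlib

section
/- In the regime switching model, for any n ≥ 1 and any 0 ≤ r ≤ n−1: P{𝓛_n = r} ≤ P{L_n = r} · sup_{a∈A} Σ_{k=1}^∞ p_{a,k}^{1+r} + inf_{0≤ε≤1} { a^{n,r}(ε) + b^{n,r}(ε) }, where a^{n,r}(ε) = c(r) E[ 1{L_n > r} ν(X_{n+1}, ε)/L_n ] and b^{n,r}(ε) = 2^{1+r} ∫_0^ε u^r E[ 1{L_n > r} ν(X_{n+1}, u/2) C(L_n, r) (1 − u/2)^{L_n − r} ] du, with c(0) = e^{−1} and c(r) = e(1+r)/√π for r ≥ 1. -/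
open MeasureTheory ENNReal Finset

/-- The constant `c(r)`: `c(0) = e⁻¹` and `c(r) = e(1+r)/√π` for `r ≥ 1`. -/
noncomputable def cDGP (r : ℕ) : ℝ≥0∞ :=
  if r = 0 then ENNReal.ofReal (Real.exp (-1))
  else ENNReal.ofReal (Real.exp 1 * (1 + r) / Real.sqrt Real.pi)

open scoped Classical in
/-- The counting function `ν(a, ε) = Σ_k 1{p_{a,k} ≥ ε}` of the family `p`. -/
noncomputable def nuCount {A : Type*} (p : A → ℕ → ℝ≥0∞) (a : A) (ε : ℝ) : ℝ≥0∞ :=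
  ∑' k, if ENNReal.ofReal ε ≤ p a k then 1 else 0


lemma aux_c_ge (r : ℕ) (hr : r ≠ 0) : ((r : ℝ≥0∞) + 1) ≤ cDGP r := by
  rw [cDGP, if_neg hr]
  have h1 : ((r : ℝ≥0∞) + 1) = ENNReal.ofReal (r + 1) := by
    rw [ENNReal.ofReal_add (by positivity) (by positivity)]; simp
  rw [h1]
  apply ENNReal.ofReal_le_ofReal
  rw [le_div_iff₀ (by positivity)]
  have h2 : Real.sqrt Real.pi ≤ 2 := by
    rw [Real.sqrt_le_left (by norm_num)]; linarith [Real.pi_le_four]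
  have h3 : (2 : ℝ) ≤ Real.exp 1 := by linarith [Real.add_one_le_exp (1 : ℝ)]
  nlinarith [(Nat.cast_nonneg r : (0 : ℝ) ≤ r)]

lemma aux_big (r m : ℕ) (hm : r < m) (p : ℝ≥0∞) (hp : p ≤ 1) :
    (m.choose r : ℝ≥0∞) * p ^ (r + 1) * (1 - p) ^ (m - r) ≤ cDGP r / m := by
  have hm0 : (m : ℝ≥0∞) ≠ 0 := by
    simp; omega
  rw [ENNReal.le_div_iff_mul_le (Or.inl hm0) (Or.inl (by simp))]
  by_cases hr : r = 0
  · subst hr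
    have hpt : p ≠ ∞ := ne_top_of_le_ne_top (by simp) hp
    rw [cDGP, if_pos rfl]
    obtain ⟨q, hq0, rfl⟩ : ∃ q : ℝ, 0 ≤ q ∧ p = ENNReal.ofReal q :=
      ⟨p.toReal, by simp, by simp [hpt]⟩
    have hq1 : q ≤ 1 := by simpa using hp
    have e1 : (1 : ℝ≥0∞) - ENNReal.ofReal q = ENNReal.ofReal (1 - q) := by
      rw [ENNReal.ofReal_sub _ hq0]; simp
    have e2 : (m : ℝ≥0∞) = ENNReal.ofReal m := by simp
    rw [e1, e2, ← ENNReal.ofReal_pow (by linarith : (0 : ℝ) ≤ 1 - q)]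
    simp only [Nat.choose_zero_right, Nat.cast_one, one_mul, zero_add, pow_one, Nat.sub_zero]
    rw [← ENNReal.ofReal_mul hq0, ← ENNReal.ofReal_mul (by
      have : 0 ≤ 1 - q := by linarith
      positivity)]
    apply ENNReal.ofReal_le_ofReal
    have h1 : (1 - q) ^ m ≤ Real.exp (-(m * q)) := by
      have : Real.exp (-(m * q)) = Real.exp (-q) ^ m := by
        rw [← Real.exp_nat_mul]; congr 1; ring
      rw [this]
      apply pow_le_pow_left₀ (by linarith)
      linarith [Real.add_one_le_exp (-q)]
    have h2 : m * q ≤ Real.exp (m * q - 1) := by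
      linarith [Real.add_one_le_exp (m * q - 1)]
    calc q * (1 - q) ^ m * m = (m * q) * (1 - q) ^ m := by ring
      _ ≤ Real.exp (m * q - 1) * Real.exp (-(m * q)) := by
        apply mul_le_mul h2 h1 (pow_nonneg (by linarith) _) (Real.exp_pos _).le
      _ = Real.exp (-1) := by rw [← Real.exp_add]; congr 1; ring
  · refine le_trans ?_ (aux_c_ge r hr)
    have hb : ((m + 1).choose (r + 1) : ℝ≥0∞) * p ^ (r + 1) * (1 - p) ^ (m - r) ≤ 1 := by
      have h := add_pow p (1 - p) (m + 1)
      rw [add_tsub_cancel_of_le hp, one_pow] at h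
      refine le_of_le_of_eq ?_ h.symm
      have := Finset.single_le_sum (f := fun i => p ^ i * (1 - p) ^ (m + 1 - i) * ((m + 1).choose i : ℝ≥0∞))
        (s := Finset.range (m + 1 + 1)) (fun _ _ => zero_le) (show r + 1 ∈ _ by simp; omega)
      refine le_trans (le_of_eq ?_) this
      simp only [Nat.add_sub_add_right]
      ring
    have hc : ((m : ℝ≥0∞) + 1) * m.choose r = (m + 1).choose (r + 1) * (r + 1) := by
      exact_mod_cast Nat.add_one_mul_choose_eq m r
    calc (m.choose r : ℝ≥0∞) * p ^ (r + 1) * (1 - p) ^ (m - r) * m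
        ≤ (m.choose r : ℝ≥0∞) * p ^ (r + 1) * (1 - p) ^ (m - r) * (m + 1) := by
          gcongr; simp
      _ = (((m : ℝ≥0∞) + 1) * m.choose r) * p ^ (r + 1) * (1 - p) ^ (m - r) := by ring
      _ = (r + 1) * (((m + 1).choose (r + 1) : ℝ≥0∞) * p ^ (r + 1) * (1 - p) ^ (m - r)) := by
        rw [hc]; ring
      _ ≤ (r + 1) * 1 := by gcongr
      _ = _ := by ring

open scoped Classical in
lemma aux_small (r s : ℕ) (p : ℝ≥0∞) (hp : p ≤ 1) (ε : ℝ) (hpe : p < ENNReal.ofReal ε) :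
    p ^ (r + 1) * (1 - p) ^ s ≤ 2 ^ (r + 1) * ∫⁻ u in Set.Ioc (0 : ℝ) ε,
      ENNReal.ofReal u ^ r * ((if ENNReal.ofReal (u / 2) ≤ p then 1 else 0) *
        ENNReal.ofReal (1 - u / 2) ^ s) := by
  have hpt : p ≠ ∞ := ne_top_of_le_ne_top (by simp) hp
  obtain ⟨q, hq0, rfl⟩ : ∃ q : ℝ, 0 ≤ q ∧ p = ENNReal.ofReal q :=
    ⟨p.toReal, by simp, by simp [hpt]⟩
  have hq1 : q ≤ 1 := by simpa using hp
  have hqe : q < ε := (ENNReal.ofReal_lt_ofReal_iff_of_nonneg hq0).1 hpe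
  have e1 : (1 : ℝ≥0∞) - ENNReal.ofReal q = ENNReal.ofReal (1 - q) := by
    rw [ENNReal.ofReal_sub _ hq0]; simp
  rw [e1]
  have key : ENNReal.ofReal (q / 2) ^ r * ENNReal.ofReal (1 - q) ^ s * ENNReal.ofReal (q / 2) ≤
      ∫⁻ u in Set.Ioc (0 : ℝ) ε,
      ENNReal.ofReal u ^ r * ((if ENNReal.ofReal (u / 2) ≤ ENNReal.ofReal q then 1 else 0) *
        ENNReal.ofReal (1 - u / 2) ^ s) := by
    calc _ = ∫⁻ u in Set.Ioc (q / 2) q, ENNReal.ofReal (q / 2) ^ r * ENNReal.ofReal (1 - q) ^ s := by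
          rw [setLIntegral_const, Real.volume_Ioc]; congr 2; ring
      _ ≤ ∫⁻ u in Set.Ioc (q / 2) q, ENNReal.ofReal u ^ r * ((if ENNReal.ofReal (u / 2) ≤ ENNReal.ofReal q then 1 else 0) *
        ENNReal.ofReal (1 - u / 2) ^ s) := by
          apply setLIntegral_mono' measurableSet_Ioc
          intro u hu
          rw [if_pos (ENNReal.ofReal_le_ofReal (by linarith [hu.1, hu.2])), one_mul]
          gcongr
          · exact hu.1.le
          · linarith [hu.1, hu.2]
      _ ≤ _ := lintegral_mono_set (Set.Ioc_subset_Ioc (by linarith) hqe.le)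
  refine le_trans (le_of_eq ?_) (mul_le_mul_right key _)
  have e2 : ENNReal.ofReal q = 2 * ENNReal.ofReal (q / 2) := by
    rw [show (2 : ℝ≥0∞) = ENNReal.ofReal 2 by simp, ← ENNReal.ofReal_mul (by norm_num)]
    congr 1; ring
  rw [e2]; ring

lemma nuCount_meas {A : Type*} (p : A → ℕ → ℝ≥0∞) (a : A) :
    Measurable (fun u : ℝ => nuCount p a (u / 2)) := by
  unfold nuCount
  refine Measurable.tsum fun k => ?_
  refine Measurable.ite ?_ measurable_const measurable_const
  exact measurableSet_le (by fun_prop) measurable_const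

/-- the iid bound -/
lemma iid_bound {A : Type*} (p : A → ℕ → ℝ≥0∞) (a : A) (hp : ∑' k, p a k = 1)
    (r m : ℕ) (hm : r < m) (ε : ℝ) :
    ∑' k, p a k * ((m.choose r : ℝ≥0∞) * p a k ^ r * (1 - p a k) ^ (m - r)) ≤
      cDGP r * (nuCount p a ε / m) + 2 ^ (r + 1) * ∫⁻ u in Set.Ioc (0 : ℝ) ε,
        ENNReal.ofReal u ^ r * (nuCount p a (u / 2) * (m.choose r : ℝ≥0∞) *
          ENNReal.ofReal (1 - u / 2) ^ (m - r)) := by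
  classical
  have hp1 : ∀ k, p a k ≤ 1 := fun k => hp ▸ ENNReal.le_tsum k
  have e1 : cDGP r * (nuCount p a ε / m) =
      ∑' k, (cDGP r / m) * (if ENNReal.ofReal ε ≤ p a k then 1 else 0) := by
    rw [ENNReal.tsum_mul_left, nuCount]
    simp only [div_eq_mul_inv]
    ring_nf
  have e2 : 2 ^ (r + 1) * ∫⁻ u in Set.Ioc (0 : ℝ) ε,
        ENNReal.ofReal u ^ r * (nuCount p a (u / 2) * (m.choose r : ℝ≥0∞) *
          ENNReal.ofReal (1 - u / 2) ^ (m - r)) = 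
      ∑' k, (m.choose r : ℝ≥0∞) * (2 ^ (r + 1) * ∫⁻ u in Set.Ioc (0 : ℝ) ε,
      ENNReal.ofReal u ^ r * ((if ENNReal.ofReal (u / 2) ≤ p a k then 1 else 0) *
        ENNReal.ofReal (1 - u / 2) ^ (m - r))) := by
    have hmeas : ∀ k, Measurable fun u : ℝ => ENNReal.ofReal u ^ r * ((if ENNReal.ofReal (u / 2) ≤ p a k then (1 : ℝ≥0∞) else 0) *
        ENNReal.ofReal (1 - u / 2) ^ (m - r)) := by
      intro k
      refine Measurable.mul (by fun_prop) (Measurable.mul ?_ (by fun_prop))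
      refine Measurable.ite ?_ measurable_const measurable_const
      exact measurableSet_le (by fun_prop) measurable_const
    rw [ENNReal.tsum_mul_left, ENNReal.tsum_mul_left, ← lintegral_tsum (fun k => (hmeas k).aemeasurable),
      mul_left_comm, ← lintegral_const_mul _ (Measurable.tsum hmeas)]
    congr 1
    apply lintegral_congr
    intro u
    rw [ENNReal.tsum_mul_left, ENNReal.tsum_mul_right, nuCount]
    ring
  rw [e1, e2, ← ENNReal.tsum_add]
  refine ENNReal.tsum_le_tsum fun k => ?_
  by_cases h : ENNReal.ofReal ε ≤ p a k
  · rw [if_pos h, mul_one]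
    refine le_trans ?_ le_self_add
    refine le_trans (le_of_eq ?_) (aux_big r m hm _ (hp1 k))
    ring
  · rw [if_neg h, mul_zero, zero_add]
    refine le_trans (le_of_eq ?_) (mul_le_mul_right (aux_small r (m - r) _ (hp1 k) ε (not_le.1 h)) _)
    ring

lemma aux_tsum_ite (f : ℕ → ℝ≥0∞) (hf : ∑' k, f k = 1) (j : ℕ) (a b : ℝ≥0∞) :
    ∑' k, f k * (if k = j then a else b) = f j * a + (1 - f j) * b := by
  have hj : f j ≤ 1 := hf ▸ ENNReal.le_tsum j
  have h2 : ∑' k, (if k = j then 0 else f k) = 1 - f j := by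
    have h1 := ENNReal.tsum_eq_add_tsum_ite (f := f) j
    rw [hf] at h1
    rw [ENNReal.sub_eq_of_eq_add_rev (ne_top_of_le_ne_top (by simp) hj) h1]
    congr!
  rw [ENNReal.tsum_eq_add_tsum_ite j, if_pos rfl, ← h2, ← ENNReal.tsum_mul_right]
  congr 1
  apply tsum_congr
  intro k
  by_cases h : k = j <;> simp [h]

lemma aux_tsum_cons {B : Type*} (n : ℕ) (g : (Fin (n + 1) → B) → ℝ≥0∞) :
    ∑' k, g k = ∑' b, ∑' k : Fin n → B, g (Fin.cons b k) := by
  rw [← (Fin.consEquiv (fun _ : Fin (n + 1) => B)).tsum_eq, ENNReal.tsum_prod']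
  rfl

lemma aux_tsum_snoc {B : Type*} (n : ℕ) (g : (Fin (n + 1) → B) → ℝ≥0∞) :
    ∑' k, g k = ∑' b, ∑' k : Fin n → B, g (Fin.snoc k b) := by
  rw [← (Fin.snocEquiv (fun _ : Fin (n + 1) => B)).tsum_eq, ENNReal.tsum_prod']
  rfl

lemma aux_prod_one (n : ℕ) (f : Fin n → ℕ → ℝ≥0∞) (hf : ∀ i, ∑' k, f i k = 1) :
    ∑' k : Fin n → ℕ, ∏ i, f i (k i) = 1 := by
  induction n with
  | zero => simp
  | succ n ih =>
    rw [aux_tsum_cons]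
    simp only [Fin.prod_univ_succ, Fin.cons_zero, Fin.cons_succ]
    simp_rw [ENNReal.tsum_mul_left]
    rw [ih (fun i => f i.succ) (fun i => hf _)]
    simp [hf]

lemma aux_pascal (m r : ℕ) (q : ℝ≥0∞) :
    ((m + 1).choose (r + 1) : ℝ≥0∞) * q ^ (r + 1) * (1 - q) ^ (m + 1 - (r + 1)) =
    q * ((m.choose r : ℝ≥0∞) * q ^ r * (1 - q) ^ (m - r)) +
    (1 - q) * ((m.choose (r + 1) : ℝ≥0∞) * q ^ (r + 1) * (1 - q) ^ (m - (r + 1))) := by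
  rw [Nat.choose_succ_succ, Nat.add_sub_add_right, Nat.cast_add]
  rcases lt_or_ge r m with h | h
  · obtain ⟨s, rfl⟩ := Nat.exists_eq_add_of_lt h
    rw [show r + s + 1 - r = s + 1 by omega, show r + s + 1 - (r + 1) = s by omega]
    ring
  · rw [Nat.choose_eq_zero_of_lt (show m < r + 1 by omega)]
    simp; ring

lemma aux_binom (n : ℕ) (S : Fin n → Prop) [DecidablePred S] (f : Fin n → ℕ → ℝ≥0∞)
    (hf : ∀ i, ∑' k, f i k = 1) (j : ℕ) (q : ℝ≥0∞) (hq : ∀ i, S i → f i j = q) (r : ℕ) :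
    ∑' k : Fin n → ℕ, (∏ i, f i (k i)) *
      (if (∑ i, if S i ∧ k i = j then 1 else 0 : ℕ) = r then 1 else 0) =
    ((∑ i, if S i then 1 else 0 : ℕ).choose r : ℝ≥0∞) * q ^ r *
      (1 - q) ^ ((∑ i, if S i then 1 else 0 : ℕ) - r) := by
  induction n generalizing r with
  | zero => cases r <;> simp
  | succ n ih =>
    rw [aux_tsum_cons]
    simp only [Fin.prod_univ_succ, Fin.sum_univ_succ, Fin.cons_zero, Fin.cons_succ]
    have ih' := ih (fun i => S i.succ) (fun i => f i.succ) (fun i => hf _) (fun i => hq _)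
    set m := (∑ i : Fin n, if S i.succ then 1 else 0 : ℕ) with hm
    by_cases h0 : S 0
    · simp only [h0, true_and, if_true]
      have : ∀ b : ℕ, ∑' k : Fin n → ℕ, f 0 b * (∏ i, f i.succ (k i)) *
          (if (if b = j then 1 else 0) + (∑ i, if S i.succ ∧ k i = j then 1 else 0 : ℕ) = r then (1 : ℝ≥0∞) else 0) =
          f 0 b * (if b = j then (∑' k : Fin n → ℕ, (∏ i, f i.succ (k i)) *
            (if 1 + (∑ i, if S i.succ ∧ k i = j then 1 else 0 : ℕ) = r then 1 else 0)) else
            (∑' k : Fin n → ℕ, (∏ i, f i.succ (k i)) *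
            (if (∑ i, if S i.succ ∧ k i = j then 1 else 0 : ℕ) = r then 1 else 0))) := by
        intro b
        simp_rw [mul_assoc]
        rw [ENNReal.tsum_mul_left]
        by_cases hb : b = j <;> simp [hb]
      simp_rw [this]
      rw [aux_tsum_ite _ (hf 0), hq 0 h0, ih' r]
      cases r with
      | zero =>
        have : ∀ x : ℕ, ¬ (1 + x = 0) := by intro x; omega
        simp only [this]
        simp [add_comm 1 m, pow_succ]
        ring
      | succ r =>
        have : ∀ x : ℕ, (1 + x = r + 1) ↔ x = r := by intro x; omega
        simp only [this]
        rw [ih' r, add_comm 1 m, aux_pascal]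
    · simp only [h0, false_and, if_false, zero_add]
      simp_rw [mul_assoc]
      simp_rw [ENNReal.tsum_mul_left]
      rw [ih' r, ENNReal.tsum_mul_right, hf 0, one_mul, mul_assoc]

/-- the conditional law of the joint occupancy count given the regimes -/
lemma aux_cond {A : Type*} [DecidableEq A] (p : A → ℕ → ℝ≥0∞) (hp : ∀ a, ∑' k, p a k = 1)
    (n r : ℕ) (x : Fin (n + 1) → A) :
    ∑' k : Fin (n + 1) → ℕ, (∏ i, p (x i) (k i)) *
      (if (∑ i : Fin n, if x i.castSucc = x (Fin.last n) ∧ k i.castSucc = k (Fin.last n)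
        then 1 else 0 : ℕ) = r then 1 else 0) =
    ∑' j, p (x (Fin.last n)) j *
      (((∑ i : Fin n, if x i.castSucc = x (Fin.last n) then 1 else 0 : ℕ).choose r : ℝ≥0∞) *
        p (x (Fin.last n)) j ^ r * (1 - p (x (Fin.last n)) j) ^
        ((∑ i : Fin n, if x i.castSucc = x (Fin.last n) then 1 else 0 : ℕ) - r)) := by
  rw [aux_tsum_snoc]
  apply tsum_congr
  intro j
  simp only [Fin.prod_univ_castSucc, Fin.snoc_castSucc, Fin.snoc_last]
  rw [← aux_binom n (fun i => x i.castSucc = x (Fin.last n)) (fun i => p (x i.castSucc))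
    (fun i => hp _) j (p (x (Fin.last n)) j) (by intro i hi; simp only [hi]) r,
    ← ENNReal.tsum_mul_left]
  apply tsum_congr
  intro k
  ring

noncomputable def extF {A : Type*} [Nonempty A] (N : ℕ) (x : Fin N → A) (i : ℕ) : A :=
  if h : i < N then x ⟨i, h⟩ else Classical.arbitrary A

lemma aux_W {A : Type*} [Nonempty A] (R : ℕ → (ℕ → A) → A → ℝ≥0∞)
    (hRdep : ∀ (n : ℕ) (a a' : ℕ → A), (∀ i < n, a i = a' i) → R n a = R n a')
    (hRsum : ∀ (n : ℕ) (a : ℕ → A), ∑' b, R n a b = 1) (N : ℕ) :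
    ∑' x : Fin N → A, ∏ i : Fin N, R i (extF N x) (x i) = 1 := by
  induction N with
  | zero => simp
  | succ N ih =>
    rw [aux_tsum_snoc]
    simp only [Fin.prod_univ_castSucc, Fin.snoc_castSucc, Fin.snoc_last]
    have h : ∀ (b : A) (x : Fin N → A) (j : ℕ), j ≤ N →
        R j (extF (N + 1) (Fin.snoc x b : Fin (N + 1) → A)) = R j (extF N x) := by
      intro b x j hj
      apply hRdep
      intro i hi
      have h1 : i < N := by omega
      have h2 : i < N + 1 := by omega
      simp only [extF, h1, h2, dif_pos]
      exact Fin.snoc_castSucc (α := fun _ => A) b x ⟨i, h1⟩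
    have h3 : ∀ (b : A) (x : Fin N → A), 
      (∏ i : Fin N, R (i.castSucc : ℕ) (extF (N + 1) (Fin.snoc x b : Fin (N + 1) → A)) (x i)) *
        R (Fin.last N : ℕ) (extF (N + 1) (Fin.snoc x b : Fin (N + 1) → A)) b =
      (∏ i : Fin N, R i (extF N x) (x i)) * R N (extF N x) b := by
      intro b x
      congr 1
      · apply Finset.prod_congr rfl
        intro i _
        rw [h _ _ _ (by simp)]; rfl
      · rw [h _ _ _ (by simp)]; rfl
    simp_rw [h3]
    rw [ENNReal.tsum_comm]
    simp_rw [ENNReal.tsum_mul_left, hRsum, mul_one]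
    exact ih

lemma aux_null {Ω : Type*} [MeasurableSpace Ω] (P : Measure Ω) [IsProbabilityMeasure P]
    (B : Set Ω) (h : P B + P Bᶜ ≤ 1) : NullMeasurableSet B P := by
  have hK : (toMeasurable P Bᶜ)ᶜ ⊆ B := by
    rw [Set.compl_subset_comm]; exact subset_toMeasurable _ _
  have hH : B ⊆ toMeasurable P B := subset_toMeasurable _ _
  have hKm : MeasurableSet (toMeasurable P Bᶜ)ᶜ := (measurableSet_toMeasurable _ _).compl
  have h1 : P (toMeasurable P B) ≤ P (toMeasurable P Bᶜ)ᶜ := by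
    rw [prob_compl_eq_one_sub (measurableSet_toMeasurable _ _), measure_toMeasurable, measure_toMeasurable]
    exact ENNReal.le_sub_of_add_le_right (measure_ne_top _ _) h
  have h2 := ae_eq_of_subset_of_measure_ge (hK.trans hH) h1 hKm.nullMeasurableSet (measure_ne_top _ _)
  have h3 : B =ᵐ[P] (toMeasurable P Bᶜ)ᶜ := by
    refine Filter.EventuallyLE.antisymm ?_ hK.eventuallyLE
    exact hH.eventuallyLE.trans h2.symm.le
  exact (hKm.nullMeasurableSet).congr h3.symm

lemma aux_le_tsum {Ω T : Type*} [MeasurableSpace Ω] [Countable T] (P : Measure Ω)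
    (Y : Ω → T) (S : Set T) [DecidablePred (· ∈ S)] :
    P (Y ⁻¹' S) ≤ ∑' t, P (Y ⁻¹' {t}) * (if t ∈ S then 1 else 0) := by
  have : Y ⁻¹' S ⊆ ⋃ t, (if t ∈ S then Y ⁻¹' {t} else ∅) := by
    intro ω hω
    rw [Set.mem_iUnion]
    exact ⟨Y ω, by rw [if_pos (show Y ω ∈ S from hω)]; simp⟩
  refine (measure_mono this).trans ((measure_iUnion_le _).trans (le_of_eq ?_))
  apply tsum_congr
  intro t
  split_ifs <;> simp

lemma aux_lintegral {Ω T : Type*} [MeasurableSpace Ω] [Countable T] (P : Measure Ω)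
    [IsProbabilityMeasure P] (Y : Ω → T) (hY : ∑' t, P (Y ⁻¹' {t}) = 1) (F : T → ℝ≥0∞) :
    ∫⁻ ω, F (Y ω) ∂P = ∑' t, P (Y ⁻¹' {t}) * F t := by
  classical
  let _ : MeasurableSpace T := ⊤
  have hN : NullMeasurable Y P := by
    intro S _
    apply aux_null
    rw [← Set.preimage_compl, ← hY]
    refine (add_le_add (aux_le_tsum P Y S) (aux_le_tsum P Y Sᶜ)).trans (le_of_eq ?_)
    rw [← ENNReal.tsum_add]
    apply tsum_congr
    intro t
    by_cases ht : t ∈ S <;> simp [ht]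
  have hA : AEMeasurable Y P := hN.aemeasurable
  rw [← lintegral_map' (f := F) (measurable_from_top.aemeasurable) hA, lintegral_countable']
  apply tsum_congr
  intro t
  rw [Measure.map_apply_of_aemeasurable hA (measurableSet_singleton t), mul_comm]

lemma aux_null2 {Ω T : Type*} [MeasurableSpace Ω] [Countable T] (P : Measure Ω)
    [IsProbabilityMeasure P] (Y : Ω → T) (hY : ∑' t, P (Y ⁻¹' {t}) = 1) (S : Set T)
    [DecidablePred (· ∈ S)] :
    P (Y ⁻¹' S) = ∑' t, P (Y ⁻¹' {t}) * (if t ∈ S then 1 else 0) := by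
  classical
  have hn : NullMeasurableSet (Y ⁻¹' S) P := by
    apply aux_null
    rw [← Set.preimage_compl, ← hY]
    refine (add_le_add (aux_le_tsum P Y S) (aux_le_tsum P Y Sᶜ)).trans (le_of_eq ?_)
    rw [← ENNReal.tsum_add]
    apply tsum_congr
    intro t
    by_cases ht : t ∈ S <;> simp [ht]
  rw [← lintegral_indicator_one₀ hn, ← aux_lintegral P Y hY]
  apply lintegral_congr
  intro ω
  simp [Set.indicator]

/-- Theorem 4.1: for the regime switching model, for `n ≥ 1`, `0 ≤ r ≤ n−1`,
`P{𝓛_n = r} ≤ P{L_n = r}·sup_a Σ_k p_{a,k}^{1+r} + inf_{0≤ε≤1}(a^{n,r}(ε) + b^{n,r}(ε))`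
with `a^{n,r}(ε) = c(r)E[1{L_n > r} ν(X_{n+1},ε)/L_n]` and
`b^{n,r}(ε) = 2^{1+r}∫_0^ε u^r E[1{L_n > r} ν(X_{n+1},u/2)·binom(L_n,r)(1−u/2)^{L_n−r}]du`.
(Indexed from 0: `𝓛_n = Σ_{i<n} 1{Z_i = Z_n}`, `L_n = Σ_{i<n} 1{X_i = X_n}`.) -/
theorem regime_switching_occupancy_bound {A : Type*} [Countable A] [DecidableEq A]
    {Ω : Type*} [MeasurableSpace Ω] (P : Measure Ω) [IsProbabilityMeasure P]
    (Z : ℕ → Ω → A × ℕ)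
    (p : A → ℕ → ℝ≥0∞) (hp : ∀ a, ∑' k, p a k = 1)
    (R : ℕ → (ℕ → A) → A → ℝ≥0∞)
    (hRdep : ∀ (n : ℕ) (a a' : ℕ → A), (∀ i < n, a i = a' i) → R n a = R n a')
    (hRsum : ∀ (n : ℕ) (a : ℕ → A), ∑' b, R n a b = 1)
    (hZ : ∀ (n : ℕ) (a : ℕ → A) (k : ℕ → ℕ),
      P (⋂ i ∈ Finset.range (n + 1), {ω | Z i ω = (a i, k i)}) =
        (∏ i ∈ Finset.range (n + 1), R i a (a i)) *
          ∏ i ∈ Finset.range (n + 1), p (a i) (k i))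
    (n r : ℕ) (hn : 1 ≤ n) (hr : r ≤ n - 1) :
    P {ω | (∑ i ∈ Finset.range n, if Z i ω = Z n ω then 1 else 0 : ℕ) = r} ≤
      P {ω | (∑ i ∈ Finset.range n, if (Z i ω).1 = (Z n ω).1 then 1 else 0 : ℕ) = r} *
          (⨆ a : A, ∑' k, p a k ^ (r + 1)) +
        ⨅ ε ∈ Set.Icc (0 : ℝ) 1,
          (cDGP r * ∫⁻ ω,
              (if r < (∑ i ∈ Finset.range n, if (Z i ω).1 = (Z n ω).1 then 1 else 0 : ℕ) then
                nuCount p (Z n ω).1 ε /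
                  ((∑ i ∈ Finset.range n, if (Z i ω).1 = (Z n ω).1 then 1 else 0 : ℕ) : ℝ≥0∞)
              else 0) ∂P) +
          2 ^ (r + 1) * ∫⁻ u in Set.Ioc (0 : ℝ) ε,
            ENNReal.ofReal u ^ r * ∫⁻ ω,
              (if r < (∑ i ∈ Finset.range n, if (Z i ω).1 = (Z n ω).1 then 1 else 0 : ℕ) then
                nuCount p (Z n ω).1 (u / 2) *
                  (((∑ i ∈ Finset.range n,
                      if (Z i ω).1 = (Z n ω).1 then 1 else 0 : ℕ).choose r : ℝ≥0∞)) *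
                  ENNReal.ofReal (1 - u / 2) ^
                    ((∑ i ∈ Finset.range n, if (Z i ω).1 = (Z n ω).1 then 1 else 0 : ℕ) - r)
              else 0) ∂P := by
  classical
  have hΩ : Nonempty Ω := P.nonempty_of_neZero
  have hA : Nonempty A := hΩ.map fun ω => (Z 0 ω).1
  let Y : Ω → (Fin (n + 1) → A) × (Fin (n + 1) → ℕ) :=
    fun ω => (fun i => (Z i ω).1, fun i => (Z i ω).2)
  let W : (Fin (n + 1) → A) → ℝ≥0∞ := fun x => ∏ i : Fin (n + 1), R i (extF (n + 1) x) (x i)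
  let L : (Fin (n + 1) → A) → ℕ :=
    fun x => ∑ i : Fin n, if x i.castSucc = x (Fin.last n) then 1 else 0
  have hYm : ∀ t, P (Y ⁻¹' {t}) = W t.1 * ∏ i, p (t.1 i) (t.2 i) := by
    rintro ⟨x, k⟩
    have h := hZ n (extF (n + 1) x) (extF (n + 1) k)
    rw [Finset.prod_range, Finset.prod_range] at h
    have e : ∀ i : Fin (n + 1), extF (n + 1) x i = x i := fun i => by rw [extF, dif_pos i.2]
    have e' : ∀ i : Fin (n + 1), extF (n + 1) k i = k i := fun i => by rw [extF, dif_pos i.2]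
    simp only [e, e'] at h
    rw [← h]
    congr 1
    ext ω
    simp only [Set.mem_preimage, Set.mem_singleton_iff, Set.mem_iInter, Finset.mem_range,
      Set.mem_ofPred_eq, Y, Prod.ext_iff, funext_iff]
    constructor
    · rintro ⟨h1, h2⟩ i hi
      have a1 := h1 ⟨i, hi⟩
      have a2 := h2 ⟨i, hi⟩
      simp only at a1 a2
      simp [extF, hi, a1, a2]
    · intro h
      refine ⟨fun i => ?_, fun i => ?_⟩
      · rw [(h i i.2).1, e]
      · rw [(h i i.2).2, e']
  have hpk : ∀ x : Fin (n + 1) → A, ∑' k : Fin (n + 1) → ℕ, ∏ i, p (x i) (k i) = 1 :=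
    fun x => aux_prod_one _ (fun i => p (x i)) (fun i => hp _)
  have hY : ∑' t, P (Y ⁻¹' {t}) = 1 := by
    simp_rw [hYm]
    rw [ENNReal.tsum_prod']
    simp_rw [ENNReal.tsum_mul_left, hpk, mul_one]
    exact aux_W R hRdep hRsum (n + 1)
  have I : ∀ F : (Fin (n + 1) → A) → ℝ≥0∞, ∫⁻ ω, F (Y ω).1 ∂P = ∑' x, W x * F x := by
    intro F
    rw [aux_lintegral P Y hY (fun t => F t.1)]
    simp_rw [hYm]
    rw [ENNReal.tsum_prod']
    apply tsum_congr
    intro x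
    simp_rw [mul_right_comm (W x), ENNReal.tsum_mul_left, hpk, mul_one]
  have hL : ∀ ω, (∑ i ∈ Finset.range n, if (Z i ω).1 = (Z n ω).1 then 1 else 0 : ℕ) =
      L (Y ω).1 := fun ω => Finset.sum_range _
  -- the left-hand side
  have hleft : P {ω | (∑ i ∈ Finset.range n, if Z i ω = Z n ω then 1 else 0 : ℕ) = r} ≤
      ∑' x, W x * ∑' j, p (x (Fin.last n)) j * (((L x).choose r : ℝ≥0∞) *
        p (x (Fin.last n)) j ^ r * (1 - p (x (Fin.last n)) j) ^ (L x - r)) := by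
    let S : Set ((Fin (n + 1) → A) × (Fin (n + 1) → ℕ)) := {t | (∑ i : Fin n,
      if t.1 i.castSucc = t.1 (Fin.last n) ∧ t.2 i.castSucc = t.2 (Fin.last n)
        then 1 else 0 : ℕ) = r}
    have hS : {ω | (∑ i ∈ Finset.range n, if Z i ω = Z n ω then 1 else 0 : ℕ) = r} = Y ⁻¹' S := by
      ext ω
      simp only [Set.mem_ofPred_eq, Set.mem_preimage, S, Finset.sum_range, Prod.ext_iff, Y]
      rfl
    rw [hS]
    refine (aux_le_tsum P Y S).trans (le_of_eq ?_)
    simp_rw [hYm]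
    rw [ENNReal.tsum_prod']
    apply tsum_congr
    intro x
    simp_rw [mul_assoc (W x), ENNReal.tsum_mul_left]
    congr 1
    exact aux_cond p hp n r x
  have hmid : P {ω | (∑ i ∈ Finset.range n, if (Z i ω).1 = (Z n ω).1 then 1 else 0 : ℕ) = r} =
      ∑' x, W x * (if L x = r then 1 else 0) := by
    simp_rw [hL]
    have := aux_null2 P Y hY {t | L t.1 = r}
    refine this.trans ?_
    rw [← I (fun x => if L x = r then 1 else 0),
      aux_lintegral P Y hY (fun t => if L t.1 = r then 1 else 0)]
    rfl
  rw [← tsub_le_iff_left]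
  refine le_iInf₂ fun ε hε => ?_
  rw [tsub_le_iff_left]
  refine hleft.trans ?_
  have h1 : ∫⁻ ω, (if r < (∑ i ∈ Finset.range n,
        if (Z i ω).1 = (Z n ω).1 then 1 else 0 : ℕ) then
        nuCount p (Z n ω).1 ε /
          ((∑ i ∈ Finset.range n, if (Z i ω).1 = (Z n ω).1 then 1 else 0 : ℕ) : ℝ≥0∞)
        else 0) ∂P = ∑' x, W x * (if r < L x then nuCount p (x (Fin.last n)) ε / L x else 0) := by
    simp_rw [hL]
    exact I (fun x => if r < L x then nuCount p (x (Fin.last n)) ε / L x else 0)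
  have h2 : ∀ u : ℝ, ∫⁻ ω,
      (if r < (∑ i ∈ Finset.range n, if (Z i ω).1 = (Z n ω).1 then 1 else 0 : ℕ) then
        nuCount p (Z n ω).1 (u / 2) *
          (((∑ i ∈ Finset.range n,
              if (Z i ω).1 = (Z n ω).1 then 1 else 0 : ℕ).choose r : ℝ≥0∞)) *
          ENNReal.ofReal (1 - u / 2) ^
            ((∑ i ∈ Finset.range n, if (Z i ω).1 = (Z n ω).1 then 1 else 0 : ℕ) - r)
      else 0) ∂P = ∑' x, W x * (if r < L x then nuCount p (x (Fin.last n)) (u / 2) *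
        ((L x).choose r : ℝ≥0∞) * ENNReal.ofReal (1 - u / 2) ^ (L x - r) else 0) := by
    intro u
    simp_rw [hL]
    exact I (fun x => if r < L x then nuCount p (x (Fin.last n)) (u / 2) *
        ((L x).choose r : ℝ≥0∞) * ENNReal.ofReal (1 - u / 2) ^ (L x - r) else 0)
  rw [hmid, h1]
  simp_rw [h2]
  have hm1 : ∀ x : Fin (n + 1) → A, Measurable fun u : ℝ => ENNReal.ofReal u ^ r *
      (if r < L x then nuCount p (x (Fin.last n)) (u / 2) *
        ((L x).choose r : ℝ≥0∞) * ENNReal.ofReal (1 - u / 2) ^ (L x - r) else 0) := by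
    intro x
    refine Measurable.mul (by fun_prop) ?_
    split_ifs
    · exact ((nuCount_meas p _).mul_const _).mul (by fun_prop)
    · exact measurable_const
  have h3 : ∫⁻ u in Set.Ioc (0 : ℝ) ε, ENNReal.ofReal u ^ r *
      ∑' x, W x * (if r < L x then nuCount p (x (Fin.last n)) (u / 2) *
        ((L x).choose r : ℝ≥0∞) * ENNReal.ofReal (1 - u / 2) ^ (L x - r) else 0) =
      ∑' x, W x * ∫⁻ u in Set.Ioc (0 : ℝ) ε, ENNReal.ofReal u ^ r *
      (if r < L x then nuCount p (x (Fin.last n)) (u / 2) *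
        ((L x).choose r : ℝ≥0∞) * ENNReal.ofReal (1 - u / 2) ^ (L x - r) else 0) := by
    simp_rw [← ENNReal.tsum_mul_left, mul_left_comm _ (W _)]
    rw [lintegral_tsum (fun x => ((hm1 x).const_mul _).aemeasurable)]
    apply tsum_congr
    intro x
    rw [lintegral_const_mul _ (hm1 x)]
  rw [h3, ← ENNReal.tsum_mul_right, ← ENNReal.tsum_mul_left, ← ENNReal.tsum_mul_left,
    ← ENNReal.tsum_add, ← ENNReal.tsum_add]
  refine ENNReal.tsum_le_tsum fun x => ?_
  rw [mul_assoc (W x), mul_left_comm _ (W x), mul_left_comm _ (W x), ← mul_add, ← mul_add]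
  refine mul_le_mul_right ?_ _
  rcases lt_trichotomy r (L x) with h | h | h
  · simp only [h, if_true]
    exact (iid_bound p _ (hp _) r (L x) h ε).trans le_add_self
  · rw [if_pos h.symm, one_mul]
    refine le_trans ?_ le_self_add
    refine le_trans (le_of_eq ?_)
      (le_iSup (fun a => ∑' k, p a k ^ (r + 1)) (x (Fin.last n)))
    apply tsum_congr
    intro j
    rw [← h]
    simp
    ring
  · simp [Nat.choose_eq_zero_of_lt h]
end

section
/- In the regime switching model, suppose every distribution P_a has support contained in {1,…,M} for some M < ∞ independent of a. Then for any n ≥ 1 and 0 ≤ r ≤ n−1: P{𝓛_n = r} ≤ Σ_{m=r}^n C'_{r,m} P{L_n = m}, where C'_{r,r} = sup_{a∈A} Σ_{k=1}^M p_{a,k}^{1+r} and C'_{r,m} = c(r) M / m for r+1 ≤ m ≤ n, with c(0) = e^{−1} and c(r) = e(1+r)/√π for r ≥ 1. -/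
open MeasureTheory ENNReal Finset

namespace RSAux

/-- Extension of a finite sequence by a default value. -/
def ext {α : Type*} (d : α) {n : ℕ} (s : Fin n → α) (i : ℕ) : α :=
  if h : i < n then s ⟨i, h⟩ else d

lemma ext_snoc_lt {α : Type*} (d : α) {n : ℕ} (s : Fin n → α) (x : α) {i : ℕ} (hi : i < n) :
    ext d (Fin.snoc s x : Fin (n + 1) → α) i = ext d s i := by
  simp [ext, hi, Nat.lt_succ_of_lt hi, Fin.snoc]

lemma ext_snoc_self {α : Type*} (d : α) {n : ℕ} (s : Fin n → α) (x : α) :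
    ext d (Fin.snoc s x : Fin (n + 1) → α) n = x := by
  simp [ext, Fin.snoc]

lemma tsum_snoc {α : Type*} (n : ℕ) (F : (Fin (n + 1) → α) → ℝ≥0∞) :
    ∑' s, F s = ∑' s : Fin n → α, ∑' x, F (Fin.snoc s x) := by
  rw [← (Fin.snocEquiv (fun _ : Fin (n + 1) => α)).tsum_eq F, ENNReal.tsum_prod', ENNReal.tsum_comm]
  rfl

lemma tsum_R {A : Type*} (d : A)
    (R : ℕ → (ℕ → A) → A → ℝ≥0∞)
    (hRdep : ∀ (n : ℕ) (a a' : ℕ → A), (∀ i < n, a i = a' i) → R n a = R n a')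
    (hRsum : ∀ (n : ℕ) (a : ℕ → A), ∑' b, R n a b = 1) (n : ℕ) :
    ∑' s : Fin n → A, ∏ i ∈ range n, R i (ext d s) (ext d s i) = 1 := by
  induction n with
  | zero => simp
  | succ n ih =>
    rw [tsum_snoc, ← ih]
    refine tsum_congr fun s => ?_
    have h : ∀ x, ∏ i ∈ range (n + 1), R i (ext d (Fin.snoc s x : Fin (n + 1) → A))
        (ext d (Fin.snoc s x : Fin (n + 1) → A) i)
        = (∏ i ∈ range n, R i (ext d s) (ext d s i)) * R n (ext d s) x := by
      intro x
      rw [prod_range_succ, ext_snoc_self]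
      congr 1
      · refine prod_congr rfl fun i hi => ?_
        have hi := mem_range.1 hi
        rw [ext_snoc_lt d s x hi, hRdep i _ (ext d s)]
        intro j hj
        exact ext_snoc_lt d s x (hj.trans hi)
      · rw [hRdep n _ (ext d s)]
        intro j hj
        exact ext_snoc_lt d s x hj
    simp_rw [h, ENNReal.tsum_mul_left, hRsum, mul_one]

lemma tsum_p {A : Type*} (p : A → ℕ → ℝ≥0∞) (hp : ∀ a, ∑' k, p a k = 1) (a : ℕ → A) (n : ℕ) :
    ∑' t : Fin n → ℕ, ∏ i ∈ range n, p (a i) (ext 0 t i) = 1 := by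
  refine tsum_R 0 (fun i _ => p (a i)) (fun _ _ _ _ => rfl) (fun i _ => hp _) n

lemma binom_step (q u : ℝ≥0∞) (m r : ℕ) :
    ((m + 1).choose (r + 1) : ℝ≥0∞) * q ^ (r + 1) * u ^ (m + 1 - (r + 1)) =
      q * (m.choose r * q ^ r * u ^ (m - r)) +
        u * (m.choose (r + 1) * q ^ (r + 1) * u ^ (m - (r + 1))) := by
  rw [Nat.choose_succ_succ, Nat.add_sub_add_right]
  rcases lt_or_ge r m with h | h
  · obtain ⟨j, rfl⟩ := Nat.exists_eq_add_of_lt h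
    have h1 : r + j + 1 - r = j + 1 := by omega
    have h2 : r + j + 1 - (r + 1) = j := by omega
    rw [h1, h2]
    push_cast
    ring
  · rw [Nat.choose_eq_zero_of_lt (show m < r + 1 by omega)]
    push_cast
    ring

lemma binom_sum {A : Type*} [DecidableEq A] (p : A → ℕ → ℝ≥0∞) (hp : ∀ a, ∑' k, p a k = 1)
    (a : ℕ → A) (b : A) (k0 : ℕ) (n : ℕ) : ∀ r : ℕ,
    (∑' t : Fin n → ℕ, if (∑ i ∈ range n, if a i = b ∧ ext 0 t i = k0 then 1 else 0 : ℕ) = r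
        then ∏ i ∈ range n, p (a i) (ext 0 t i) else 0) =
      ((∑ i ∈ range n, if a i = b then 1 else 0 : ℕ).choose r : ℝ≥0∞) * (p b k0) ^ r *
        (1 - p b k0) ^ ((∑ i ∈ range n, if a i = b then 1 else 0 : ℕ) - r) := by
  induction n with
  | zero =>
    intro r
    cases r <;> simp
  | succ n ih =>
    intro r
    rw [tsum_snoc]
    have hN : ∀ (s : Fin n → ℕ) (x : ℕ), (∑ i ∈ range (n + 1),
        if a i = b ∧ ext 0 (Fin.snoc s x : Fin (n + 1) → ℕ) i = k0 then 1 else 0 : ℕ) =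
        (∑ i ∈ range n, if a i = b ∧ ext 0 s i = k0 then 1 else 0 : ℕ) +
          if a n = b ∧ x = k0 then 1 else 0 := by
      intro s x
      rw [sum_range_succ, ext_snoc_self]
      congr 1
      refine sum_congr rfl fun i hi => ?_
      rw [ext_snoc_lt 0 s x (mem_range.1 hi)]
    have hP : ∀ (s : Fin n → ℕ) (x : ℕ), (∏ i ∈ range (n + 1),
        p (a i) (ext 0 (Fin.snoc s x : Fin (n + 1) → ℕ) i)) =
        (∏ i ∈ range n, p (a i) (ext 0 s i)) * p (a n) x := by
      intro s x
      rw [prod_range_succ, ext_snoc_self]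
      congr 1
      refine prod_congr rfl fun i hi => ?_
      rw [ext_snoc_lt 0 s x (mem_range.1 hi)]
    simp_rw [hN, hP]
    rw [sum_range_succ]
    by_cases hb : a n = b
    · simp only [hb, true_and, if_true]
      have hu : ∑' x, (if x = k0 then 0 else p b x) = 1 - p b k0 := by
        have h1 := ENNReal.tsum_eq_add_tsum_ite (f := p b) k0
        rw [hp] at h1
        have hq : p b k0 ≠ ⊤ := ne_top_of_le_ne_top one_ne_top (hp b ▸ ENNReal.le_tsum k0)
        rw [h1, ENNReal.add_sub_cancel_left hq]
        refine tsum_congr fun x => ?_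
        by_cases hx : x = k0 <;> simp [hx]
      have hsplit : ∀ s : Fin n → ℕ, (∑' x : ℕ,
          if ((∑ i ∈ range n, if a i = b ∧ ext 0 s i = k0 then 1 else 0 : ℕ) +
            if x = k0 then 1 else 0) = r
          then (∏ i ∈ range n, p (a i) (ext 0 s i)) * p b x else 0) =
          p b k0 * (if ((∑ i ∈ range n, if a i = b ∧ ext 0 s i = k0 then 1 else 0 : ℕ) + 1) = r
            then (∏ i ∈ range n, p (a i) (ext 0 s i)) else 0) +
          (1 - p b k0) * (if (∑ i ∈ range n, if a i = b ∧ ext 0 s i = k0 then 1 else 0 : ℕ) = r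
            then (∏ i ∈ range n, p (a i) (ext 0 s i)) else 0) := by
        intro s
        generalize (∑ i ∈ range n, if a i = b ∧ ext 0 s i = k0 then 1 else 0 : ℕ) = N
        generalize (∏ i ∈ range n, p (a i) (ext 0 s i)) = w
        rw [ENNReal.tsum_eq_add_tsum_ite k0]
        congr 1
        · split_ifs <;> simp_all [mul_comm]
        · rw [← hu, ← ENNReal.tsum_mul_right]
          refine tsum_congr fun x => ?_
          by_cases hx : x = k0 <;> simp [hx, mul_comm]
      simp_rw [hsplit]
      rw [ENNReal.tsum_add, ENNReal.tsum_mul_left, ENNReal.tsum_mul_left, ih]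
      cases r with
      | zero => simp [pow_succ, mul_comm]
      | succ r =>
        simp_rw [Nat.add_right_cancel_iff]
        rw [ih, binom_step]
    · simp only [hb, false_and, if_false, add_zero]
      rw [← ih r]
      refine tsum_congr fun s => ?_
      split_ifs
      · rw [ENNReal.tsum_mul_left, hp, mul_one]
      · simp

lemma real_bound_zero (x : ℝ) (h1 : x ≤ 1) (m : ℕ) (hm : 0 < m) :
    x * (1 - x) ^ m ≤ Real.exp (-1) / m := by
  have hm' : (0 : ℝ) < m := by exact_mod_cast hm
  rw [le_div_iff₀ hm']
  have e1 : (1 - x) ^ m ≤ Real.exp (-(m * x)) := by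
    calc (1 - x) ^ m ≤ (Real.exp (-x)) ^ m :=
          pow_le_pow_left₀ (by linarith) (by linarith [Real.add_one_le_exp (-x)]) m
      _ = _ := by rw [← Real.exp_nat_mul]; ring_nf
  have e2 : m * x ≤ Real.exp (m * x - 1) := by linarith [Real.add_one_le_exp (m * x - 1)]
  calc x * (1 - x) ^ m * m = (m * x) * (1 - x) ^ m := by ring
    _ ≤ Real.exp (m * x - 1) * Real.exp (-(m * x)) :=
        mul_le_mul e2 e1 (pow_nonneg (by linarith) _) (Real.exp_pos _).le
    _ = Real.exp (-1) := by rw [← Real.exp_add]; ring_nf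

lemma real_bound_succ (x : ℝ) (h0 : 0 ≤ x) (h1 : x ≤ 1) (m r : ℕ) (hm : r < m) :
    x * (m.choose r * x ^ r * (1 - x) ^ (m - r)) ≤
      Real.exp 1 * (1 + r) / Real.sqrt Real.pi / m := by
  have hm' : (0 : ℝ) < m := by exact_mod_cast (Nat.zero_lt_of_lt hm)
  have hb : ((m + 1).choose (r + 1) : ℝ) * x ^ (r + 1) * (1 - x) ^ (m - r) ≤ 1 := by
    have hs := add_pow x (1 - x) (m + 1)
    rw [add_sub_cancel, one_pow] at hs
    refine le_trans ?_ hs.ge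
    have := Finset.single_le_sum (f := fun k => x ^ k * (1 - x) ^ (m + 1 - k) * ((m + 1).choose k : ℝ))
      (s := range (m + 1 + 1)) (fun k _ => by
        have : (0:ℝ) ≤ 1 - x := by linarith
        positivity) (mem_range.2 (show r + 1 < m + 1 + 1 by omega))
    simp only [Nat.add_sub_add_right] at this
    refine le_trans (le_of_eq ?_) this
    ring
  have hc : ((m : ℝ) + 1) * m.choose r = (m + 1).choose (r + 1) * (r + 1) := by
    exact_mod_cast Nat.add_one_mul_choose_eq m r
  have hX : 0 ≤ x * (m.choose r * x ^ r * (1 - x) ^ (m - r)) := by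
    have : (0:ℝ) ≤ 1 - x := by linarith
    positivity
  have hsq : Real.sqrt Real.pi ≤ 2 := by
    rw [Real.sqrt_le_left (by norm_num)]
    linarith [Real.pi_le_four]
  have hspos : 0 < Real.sqrt Real.pi := Real.sqrt_pos.2 Real.pi_pos
  have hc1 : (1 + r : ℝ) ≤ Real.exp 1 * (1 + r) / Real.sqrt Real.pi := by
    rw [le_div_iff₀ hspos]
    have : Real.sqrt Real.pi ≤ Real.exp 1 := by linarith [Real.exp_one_gt_d9]
    nlinarith [(Nat.cast_nonneg r : (0:ℝ) ≤ r)]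
  rw [le_div_iff₀ hm']
  refine le_trans ?_ hc1
  calc x * (m.choose r * x ^ r * (1 - x) ^ (m - r)) * m
      ≤ x * (m.choose r * x ^ r * (1 - x) ^ (m - r)) * (m + 1) := by
        apply mul_le_mul_of_nonneg_left _ hX; linarith
    _ = (((m : ℝ) + 1) * m.choose r) * (x ^ (r + 1) * (1 - x) ^ (m - r)) := by ring
    _ = (((m + 1).choose (r + 1) : ℝ) * x ^ (r + 1) * (1 - x) ^ (m - r)) * (r + 1) := by
        rw [hc]; ring
    _ ≤ 1 * (r + 1) := by gcongr
    _ = 1 + r := by ring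

lemma enn_bound (q : ℝ≥0∞) (hq : q ≤ 1) (m r : ℕ) (hm : r < m) :
    q * (m.choose r * q ^ r * (1 - q) ^ (m - r)) ≤ cDGP r / m := by
  have hqt : q ≠ ⊤ := ne_top_of_le_ne_top one_ne_top hq
  obtain ⟨x, h0, rfl⟩ : ∃ x : ℝ, 0 ≤ x ∧ q = ENNReal.ofReal x :=
    ⟨q.toReal, toReal_nonneg, (ofReal_toReal hqt).symm⟩
  have h1 : x ≤ 1 := by simpa using hq
  have h2 : 0 ≤ 1 - x := by linarith
  have hm' : (0 : ℝ) < m := by exact_mod_cast (Nat.zero_lt_of_lt hm)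
  have hL : ENNReal.ofReal x * (m.choose r * ENNReal.ofReal x ^ r *
      (1 - ENNReal.ofReal x) ^ (m - r)) =
      ENNReal.ofReal (x * (m.choose r * x ^ r * (1 - x) ^ (m - r))) := by
    rw [ENNReal.ofReal_mul h0, ENNReal.ofReal_mul (by positivity), ENNReal.ofReal_mul (by positivity),
      ENNReal.ofReal_pow h0, ENNReal.ofReal_pow h2, ENNReal.ofReal_natCast,
      ENNReal.ofReal_sub _ h0, ENNReal.ofReal_one]
  rw [hL]
  unfold cDGP
  split_ifs with hr
  · subst hr
    rw [← ENNReal.ofReal_natCast, ← ENNReal.ofReal_div_of_pos hm']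
    apply ENNReal.ofReal_le_ofReal
    simpa using real_bound_zero x h1 m hm
  · rw [← ENNReal.ofReal_natCast m, ← ENNReal.ofReal_div_of_pos hm']
    exact ENNReal.ofReal_le_ofReal (real_bound_succ x h0 h1 m r hm)

/-- conditional bound given the regimes -/
lemma cond_bound {A : Type*} [DecidableEq A] (p : A → ℕ → ℝ≥0∞) (hp : ∀ a, ∑' k, p a k = 1)
    (M : ℕ) (hM : ∀ a, ∀ k, M ≤ k → p a k = 0) (a : ℕ → A) (n r : ℕ) :
    (∑' t : Fin (n + 1) → ℕ,
      if (∑ i ∈ range n, if a i = a n ∧ ext 0 t i = ext 0 t n then 1 else 0 : ℕ) = r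
        then ∏ i ∈ range (n + 1), p (a i) (ext 0 t i) else 0) ≤
      ∑ m ∈ Finset.Icc r n,
        (if m = r then ⨆ a : A, ∑' k, p a k ^ (r + 1)
         else cDGP r * (M : ℝ≥0∞) / (m : ℝ≥0∞)) *
          (if (∑ i ∈ range n, if a i = a n then 1 else 0 : ℕ) = m then 1 else 0) := by
  have key : (∑' t : Fin (n + 1) → ℕ,
      if (∑ i ∈ range n, if a i = a n ∧ ext 0 t i = ext 0 t n then 1 else 0 : ℕ) = r
        then ∏ i ∈ range (n + 1), p (a i) (ext 0 t i) else 0) =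
      ∑' x, p (a n) x * (((∑ i ∈ range n, if a i = a n then 1 else 0 : ℕ).choose r : ℝ≥0∞) *
        (p (a n) x) ^ r *
        (1 - p (a n) x) ^ ((∑ i ∈ range n, if a i = a n then 1 else 0 : ℕ) - r)) := by
    rw [tsum_snoc, ENNReal.tsum_comm]
    refine tsum_congr fun x => ?_
    rw [← binom_sum p hp a (a n) x n r, ← ENNReal.tsum_mul_left]
    refine tsum_congr fun s => ?_
    have h1 : (∑ i ∈ range n, if a i = a n ∧ ext 0 (Fin.snoc s x : Fin (n + 1) → ℕ) i =
        ext 0 (Fin.snoc s x : Fin (n + 1) → ℕ) n then 1 else 0 : ℕ) =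
        (∑ i ∈ range n, if a i = a n ∧ ext 0 s i = x then 1 else 0 : ℕ) := by
      refine sum_congr rfl fun i hi => ?_
      rw [ext_snoc_lt 0 s x (mem_range.1 hi), ext_snoc_self]
    have h2 : (∏ i ∈ range (n + 1), p (a i) (ext 0 (Fin.snoc s x : Fin (n + 1) → ℕ) i)) =
        p (a n) x * (∏ i ∈ range n, p (a i) (ext 0 s i)) := by
      rw [prod_range_succ, ext_snoc_self, mul_comm]
      congr 1
      refine prod_congr rfl fun i hi => ?_
      rw [ext_snoc_lt 0 s x (mem_range.1 hi)]
    rw [h1, h2]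
    split_ifs <;> simp
  rw [key]
  have hLn : (∑ i ∈ range n, if a i = a n then 1 else 0 : ℕ) ≤ n := by
    calc (∑ i ∈ range n, if a i = a n then 1 else 0 : ℕ) ≤ ∑ i ∈ range n, 1 :=
          sum_le_sum fun i _ => by split_ifs <;> simp
      _ = n := by simp
  generalize (∑ i ∈ range n, if a i = a n then 1 else 0 : ℕ) = L at hLn ⊢
  rcases lt_or_ge L r with hLr | hLr
  · simp [Nat.choose_eq_zero_of_lt hLr]
  refine le_trans ?_ (Finset.single_le_sum (f := fun m => (if m = r then ⨆ a : A, ∑' k, p a k ^ (r + 1)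
         else cDGP r * (M : ℝ≥0∞) / (m : ℝ≥0∞)) * (if L = m then 1 else 0))
         (fun _ _ => zero_le) (Finset.mem_Icc.2 ⟨hLr, hLn⟩))
  simp only [if_true, mul_one]
  rcases hLr.eq_or_lt with rfl | hLr
  · simp only [if_true, Nat.choose_self, Nat.sub_self, pow_zero, mul_one, Nat.cast_one, one_mul]
    refine le_trans (le_of_eq ?_) (le_iSup (fun b => ∑' k, p b k ^ (r + 1)) (a n))
    refine tsum_congr fun x => ?_
    rw [pow_succ, mul_comm]
  · rw [if_neg hLr.ne']
    rw [tsum_eq_sum (s := range M)]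
    · calc _ ≤ ∑ x ∈ range M, cDGP r / L := by
            refine sum_le_sum fun x _ => enn_bound _ ?_ _ _ hLr
            exact hp (a n) ▸ ENNReal.le_tsum x
        _ = _ := by
            rw [sum_const, card_range, nsmul_eq_mul, mul_comm, ENNReal.div_eq_inv_mul,
              ENNReal.div_eq_inv_mul, mul_assoc]
    · intro x hx
      rw [hM _ _ (by simpa using hx), zero_mul]

/-- A countable partition whose outer masses add up to one determines all masses. -/
lemma mass {Ω S : Type*} [Countable S] [MeasurableSpace Ω] (P : Measure Ω) [IsProbabilityMeasure P]
    (W : Ω → S) (w : S → ℝ≥0∞) (hw : ∀ s, P {ω | W ω = s} = w s) (hs : ∑' s, w s = 1)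
    (Q : S → Prop) [DecidablePred Q] :
    P {ω | Q (W ω)} = ∑' s, if Q s then w s else 0 := by
  have up : ∀ (Q : S → Prop) [DecidablePred Q],
      P {ω | Q (W ω)} ≤ ∑' s, if Q s then w s else 0 := by
    intro Q _
    calc P {ω | Q (W ω)} ≤ P (⋃ s, {ω | W ω = s ∧ Q s}) := by
          apply measure_mono
          intro ω h
          exact Set.mem_iUnion.2 ⟨W ω, rfl, h⟩
      _ ≤ ∑' s, P {ω | W ω = s ∧ Q s} := measure_iUnion_le _
      _ = _ := by
          refine tsum_congr fun s => ?_
          by_cases h : Q s <;> simp [h, hw]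
  refine le_antisymm (up Q) ?_
  have h1 : (1 : ℝ≥0∞) ≤ P {ω | Q (W ω)} + P {ω | ¬ Q (W ω)} := by
    rw [← measure_univ (μ := P)]
    refine le_trans (measure_mono ?_) (measure_union_le _ _)
    intro ω _
    exact em _
  have h2 := up (fun s => ¬ Q s)
  have h3 : (∑' s, if Q s then w s else 0) + (∑' s, if ¬ Q s then w s else 0) = 1 := by
    rw [← ENNReal.tsum_add, ← hs]
    refine tsum_congr fun s => ?_
    by_cases h : Q s <;> simp [h]
  have hfin : (∑' s, if ¬ Q s then w s else 0) ≠ ⊤ := by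
    refine ne_top_of_le_ne_top one_ne_top (h3 ▸ le_add_self)
  refine (ENNReal.add_le_add_iff_right hfin).1 ?_
  rw [h3]
  exact h1.trans (by gcongr)

end RSAux

/-- Example 4.2: in the regime switching model where every distribution
`P_a` has support contained in `{0,…,M−1}` (i.e. at most `M` letters), for `n ≥ 1` and
`0 ≤ r ≤ n−1`: `P{𝓛_n = r} ≤ Σ_{m=r}^n C'_{r,m} P{L_n = m}` with
`C'_{r,r} = sup_a Σ_k p_{a,k}^{1+r}` and `C'_{r,m} = c(r)M/m` for `r+1 ≤ m ≤ n`. -/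
theorem regime_switching_finite_support_bound {A : Type*} [Countable A] [DecidableEq A]
    {Ω : Type*} [MeasurableSpace Ω] (P : Measure Ω) [IsProbabilityMeasure P]
    (Z : ℕ → Ω → A × ℕ)
    (p : A → ℕ → ℝ≥0∞) (hp : ∀ a, ∑' k, p a k = 1)
    (M : ℕ) (hM : ∀ a, ∀ k, M ≤ k → p a k = 0)
    (R : ℕ → (ℕ → A) → A → ℝ≥0∞)
    (hRdep : ∀ (n : ℕ) (a a' : ℕ → A), (∀ i < n, a i = a' i) → R n a = R n a')
    (hRsum : ∀ (n : ℕ) (a : ℕ → A), ∑' b, R n a b = 1)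
    (hZ : ∀ (n : ℕ) (a : ℕ → A) (k : ℕ → ℕ),
      P (⋂ i ∈ Finset.range (n + 1), {ω | Z i ω = (a i, k i)}) =
        (∏ i ∈ Finset.range (n + 1), R i a (a i)) *
          ∏ i ∈ Finset.range (n + 1), p (a i) (k i))
    (n r : ℕ) (hn : 1 ≤ n) (hr : r ≤ n - 1) :
    P {ω | (∑ i ∈ Finset.range n, if Z i ω = Z n ω then 1 else 0 : ℕ) = r} ≤
      ∑ m ∈ Finset.Icc r n,
        (if m = r then ⨆ a : A, ∑' k, p a k ^ (r + 1)
         else cDGP r * (M : ℝ≥0∞) / (m : ℝ≥0∞)) *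
          P {ω | (∑ i ∈ Finset.range n, if (Z i ω).1 = (Z n ω).1 then 1 else 0 : ℕ) = m} := by

  classical
  obtain ⟨ω0⟩ : Nonempty Ω := by
    by_contra h
    rw [not_nonempty_iff] at h
    have := measure_univ (μ := P)
    simp [Set.univ_eq_empty_iff.2 h] at this
  set d : A := (Z 0 ω0).1
  let W : Ω → (Fin (n + 1) → A) × (Fin (n + 1) → ℕ) := fun ω => (fun i => (Z i ω).1, fun i => (Z i ω).2)
  let ρ : (Fin (n + 1) → A) → ℝ≥0∞ := fun s =>
    ∏ i ∈ range (n + 1), R i (RSAux.ext d s) (RSAux.ext d s i)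
  let π : (Fin (n + 1) → A) → (Fin (n + 1) → ℕ) → ℝ≥0∞ := fun s t =>
    ∏ i ∈ range (n + 1), p (RSAux.ext d s i) (RSAux.ext 0 t i)
  let w : (Fin (n + 1) → A) × (Fin (n + 1) → ℕ) → ℝ≥0∞ := fun s => ρ s.1 * π s.1 s.2
  have hπ : ∀ s, ∑' t, π s t = 1 := fun s => RSAux.tsum_p p hp _ _
  have hρ : ∑' s, ρ s = 1 := RSAux.tsum_R d R hRdep hRsum _
  have hs : ∑' s, w s = 1 := by
    rw [ENNReal.tsum_prod']
    simp only [w, ENNReal.tsum_mul_left, hπ, mul_one, hρ]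
  have hW : ∀ s, P {ω | W ω = s} = w s := by
    rintro ⟨s, t⟩
    have := hZ n (RSAux.ext d s) (RSAux.ext 0 t)
    refine Eq.trans ?_ this
    congr 1
    ext ω
    simp only [Set.mem_ofPred_eq, Set.mem_iInter, mem_range, W, Prod.mk.injEq, funext_iff]
    constructor
    · rintro ⟨h1, h2⟩ i hi
      have h1 := h1 ⟨i, hi⟩
      have h2 := h2 ⟨i, hi⟩
      refine Prod.ext ?_ ?_
      · simpa [RSAux.ext, hi] using h1
      · simpa [RSAux.ext, hi] using h2
    · intro h
      refine ⟨fun i => ?_, fun i => ?_⟩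
      · rw [h i i.2]; exact dif_pos i.2
      · rw [h i i.2]; exact dif_pos i.2
  have hX : ∀ ω, ∀ i < n + 1, RSAux.ext d (W ω).1 i = (Z i ω).1 := by
    intro ω i hi; simp [RSAux.ext, hi, W]
  have hK : ∀ ω, ∀ i < n + 1, RSAux.ext 0 (W ω).2 i = (Z i ω).2 := by
    intro ω i hi; simp [RSAux.ext, hi, W]
  have e1 : {ω | (∑ i ∈ Finset.range n, if Z i ω = Z n ω then 1 else 0 : ℕ) = r} =
      {ω | (fun s : (Fin (n + 1) → A) × (Fin (n + 1) → ℕ) => (∑ i ∈ range n, if RSAux.ext d s.1 i = RSAux.ext d s.1 n ∧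
        RSAux.ext 0 s.2 i = RSAux.ext 0 s.2 n then 1 else 0 : ℕ) = r) (W ω)} := by
    ext ω
    simp only [Set.mem_ofPred_eq]
    rw [sum_congr rfl fun i hi => ?_]
    have hi := mem_range.1 hi
    rw [hX ω i (by omega), hX ω n (by omega), hK ω i (by omega), hK ω n (by omega)]
    simp only [Prod.ext_iff]
  have e2 : ∀ m, {ω | (∑ i ∈ Finset.range n, if (Z i ω).1 = (Z n ω).1 then 1 else 0 : ℕ) = m} =
      {ω | (fun s : (Fin (n + 1) → A) × (Fin (n + 1) → ℕ) => (∑ i ∈ range n, if RSAux.ext d s.1 i = RSAux.ext d s.1 n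
        then 1 else 0 : ℕ) = m) (W ω)} := by
    intro m
    ext ω
    simp only [Set.mem_ofPred_eq]
    rw [sum_congr rfl fun i hi => ?_]
    have hi := mem_range.1 hi
    rw [hX ω i (by omega), hX ω n (by omega)]
  have f2 : ∀ m, P {ω | (∑ i ∈ Finset.range n, if (Z i ω).1 = (Z n ω).1 then 1 else 0 : ℕ) = m} =
      ∑' s : Fin (n + 1) → A, ρ s * (if (∑ i ∈ range n, if RSAux.ext d s i = RSAux.ext d s n
        then 1 else 0 : ℕ) = m then 1 else 0) := by
    intro m
    rw [e2 m, RSAux.mass P W w hW hs (fun s : (Fin (n + 1) → A) × (Fin (n + 1) → ℕ) => (∑ i ∈ range n, if RSAux.ext d s.1 i = RSAux.ext d s.1 n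
        then 1 else 0 : ℕ) = m), ENNReal.tsum_prod']
    refine tsum_congr fun s => ?_
    by_cases h : (∑ i ∈ range n, if RSAux.ext d s i = RSAux.ext d s n then 1 else 0 : ℕ) = m
    · simp only [h, if_true, w, ENNReal.tsum_mul_left, hπ]
    · simp only [h, if_false, tsum_zero, mul_zero]
  have f1 : P {ω | (∑ i ∈ Finset.range n, if Z i ω = Z n ω then 1 else 0 : ℕ) = r} =
      ∑' s : Fin (n + 1) → A, ρ s * ∑' t : Fin (n + 1) → ℕ,
        if (∑ i ∈ range n, if RSAux.ext d s i = RSAux.ext d s n ∧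
          RSAux.ext 0 t i = RSAux.ext 0 t n then 1 else 0 : ℕ) = r then π s t else 0 := by
    rw [e1, RSAux.mass P W w hW hs (fun s : (Fin (n + 1) → A) × (Fin (n + 1) → ℕ) => (∑ i ∈ range n, if RSAux.ext d s.1 i = RSAux.ext d s.1 n ∧
        RSAux.ext 0 s.2 i = RSAux.ext 0 s.2 n then 1 else 0 : ℕ) = r), ENNReal.tsum_prod']
    refine tsum_congr fun s => ?_
    rw [← ENNReal.tsum_mul_left]
    refine tsum_congr fun t => ?_
    simp only [w, mul_ite, mul_zero]
  rw [f1]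
  simp_rw [f2, ← ENNReal.tsum_mul_left]
  rw [← Summable.tsum_finsetSum (fun _ _ => ENNReal.summable)]
  refine ENNReal.tsum_le_tsum fun s => ?_
  rw [ENNReal.tsum_mul_left]
  refine (mul_le_mul_right (RSAux.cond_bound p hp M hM (RSAux.ext d s) n r) (ρ s)).trans (le_of_eq ?_)
  rw [mul_sum]
  refine sum_congr rfl fun m _ => ?_
  rw [mul_left_comm]
end

section
/- In the regime switching model, assume ν(a, ε) ≤ ε^{−α} ℓ(1/ε) for all a ∈ A and all ε ∈ (0,1], where α ∈ [0,1] and ℓ is a non-increasing slowly varying function. Then P{𝓛_n = r} ≤ c_1(α,r) E[ 1{L_n > r} L_n^{−(1−α)} ℓ(L_n) ] + c_2(α,r) P{L_n = r}, where c_1(α,r) = c(r) + (4^{1+r}/r!) (1+r)^{1+r−α} γ(1+r−α, 1/2), c_2(α,0) = 1, and for r ≥ 1, c_2(α,r) = min{1, p_∨^{r+1} r^α ℓ(r) + r^{−r}} with p_∨ = sup_{(a,k)} p_{a,k}, and γ(t,x) = ∫_0^x u^{t−1} e^{−u} du is the lower incomplete gamma function. -/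
open MeasureTheory ENNReal Finset Filter

/-- `ℓ` is slowly varying at `+∞`: `ℓ(cx)/ℓ(x) → 1` for every `c > 0`. -/
def SlowlyVarying (ℓ : ℝ → ℝ) : Prop :=
  ∀ c : ℝ, 0 < c → Tendsto (fun x => ℓ (c * x) / ℓ x) atTop (nhds 1)

/-- Lower incomplete gamma function `γ(t,x) = ∫_0^x u^{t−1}e^{−u} du`, valued in `ℝ≥0∞`
(it is `+∞` when `t ≤ 0`). -/
noncomputable def lowerGammaE (t x : ℝ) : ℝ≥0∞ :=
  ∫⁻ u in Set.Ioc (0 : ℝ) x, ENNReal.ofReal (u ^ (t - 1) * Real.exp (-u))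

/-- `c₁(α,r) = c(r) + (4^{1+r}/r!)(1+r)^{1+r−α} γ(1+r−α, 1/2)`. -/
noncomputable def cOne (α : ℝ) (r : ℕ) : ℝ≥0∞ :=
  cDGP r + (4 ^ (r + 1) / (r.factorial : ℝ≥0∞)) *
    ENNReal.ofReal ((1 + r : ℝ) ^ (1 + r - α)) * lowerGammaE (1 + r - α) (1 / 2)

/-- `c₂(α,r)`: `1` for `r = 0`, and `min{1, p_∨^{r+1} r^α ℓ(r) + r^{−r}}` for `r ≥ 1`. -/
noncomputable def cTwo (α : ℝ) (r : ℕ) (ℓ : ℝ → ℝ) (pmax : ℝ≥0∞) : ℝ≥0∞ :=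
  if r = 0 then 1
  else min 1 (pmax ^ (r + 1) * ENNReal.ofReal ((r : ℝ) ^ α * ℓ r) +
    ENNReal.ofReal ((r : ℝ) ^ (-(r : ℝ))))


lemma layer (m r : ℕ) (hm : 0 < m) (x : ℝ) (hx0 : 0 ≤ x) (hx : x ≤ 1 / m) :
    ENNReal.ofReal (x ^ (r+1)) ≤ ∫⁻ s in Set.Ioc (0:ℝ) (1/2),
      ENNReal.ofReal ((r+1) * (2/m)^(r+1) * s ^ r) *
        (if ENNReal.ofReal (2 * s / m) ≤ ENNReal.ofReal x then 1 else 0) := by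
  have hm' : (0:ℝ) < m := by exact_mod_cast hm
  have hle : m * x / 2 ≤ 1/2 := by
    rw [le_div_iff₀ hm'] at hx; linarith
  calc ENNReal.ofReal (x ^ (r+1)) = ∫⁻ s in Set.Ioc (0:ℝ) (m * x / 2),
      ENNReal.ofReal ((r+1) * (2/m)^(r+1) * s ^ r) := by
        have h0 : 0 ≤ m * x / 2 := by positivity
        rw [← ofReal_integral_eq_lintegral_ofReal]
        · rw [← intervalIntegral.integral_of_le h0, intervalIntegral.integral_const_mul, integral_pow]
          congr 1
          simp only [ne_eq, Nat.add_eq_zero_iff, one_ne_zero, and_false, not_false_eq_true, zero_pow, sub_zero]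
          rw [div_pow, div_pow, mul_pow]
          field_simp
        · apply Continuous.integrableOn_Ioc
          fun_prop
        · rw [EventuallyLE, ae_restrict_iff' measurableSet_Ioc]
          refine Eventually.of_forall fun s hs => ?_
          have := hs.1
          simp only [Pi.zero_apply]
          positivity
    _ = ∫⁻ s in Set.Ioc (0:ℝ) (m * x / 2), ENNReal.ofReal ((r+1) * (2/m)^(r+1) * s ^ r) *
        (if ENNReal.ofReal (2 * s / m) ≤ ENNReal.ofReal x then 1 else 0) := by
        apply setLIntegral_congr_fun measurableSet_Ioc
        intro s hs
        have : 2 * s / m ≤ x := by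
          rw [div_le_iff₀ hm']; have := hs.2; linarith
        simp [ENNReal.ofReal_le_ofReal this]
    _ ≤ _ := lintegral_mono_set (Set.Ioc_subset_Ioc_right hle)

lemma big_term (m r : ℕ) (hrm : r < m) (x : ℝ) (hx0 : 0 ≤ x) (hx : x ≤ 1) :
    ENNReal.ofReal (x * (m.choose r * x ^ r * (1 - x) ^ (m - r))) ≤
      cDGP r * ENNReal.ofReal (1 / m) := by
  have hm' : (0:ℝ) < m := by exact_mod_cast (by omega : 0 < m)
  have hy : 0 ≤ 1 - x := by linarith
  unfold cDGP
  split_ifs with h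
  · subst h
    rw [← ENNReal.ofReal_mul (Real.exp_pos _).le]
    apply ENNReal.ofReal_le_ofReal
    simp only [Nat.choose_zero_right, Nat.cast_one, pow_zero, mul_one, one_mul, Nat.sub_zero]
    have h1 : (1 - x) ^ m ≤ Real.exp (-(m * x)) := by
      have : (1 - x) ≤ Real.exp (-x) := by have := Real.add_one_le_exp (-x); linarith
      calc (1-x)^m ≤ (Real.exp (-x))^m := by gcongr
        _ = _ := by rw [← Real.exp_nat_mul]; congr 1; ring
    have h2 : m * x ≤ Real.exp (m * x - 1) := by
      have := Real.add_one_le_exp (m * x - 1); linarith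
    rw [mul_one_div, le_div_iff₀ hm']
    calc x * (1-x)^m * m ≤ x * Real.exp (-(m*x)) * m := by gcongr
      _ = (m * x) * Real.exp (-(m*x)) := by ring
      _ ≤ Real.exp (m * x - 1) * Real.exp (-(m*x)) := by gcongr
      _ = _ := by rw [← Real.exp_add]; congr 1; ring
  · rw [← ENNReal.ofReal_mul (by positivity)]
    apply ENNReal.ofReal_le_ofReal
    have hb : ((m+1).choose (r+1) : ℝ) * x ^ (r+1) * (1-x)^(m - r) ≤ 1 := by
      have := add_pow x (1-x) (m+1)
      rw [add_sub_cancel, one_pow] at this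
      have h2 := Finset.single_le_sum (f := fun k => x ^ k * (1-x)^(m+1-k) * ((m+1).choose k : ℝ)) (s := Finset.range (m+1+1)) (fun i _ => by positivity) (Finset.mem_range.mpr (show r+1 < m+1+1 by omega))
      refine le_trans (le_of_eq ?_) (h2.trans_eq this.symm)
      simp only [Nat.add_sub_add_right]
      ring
    have hc : ((m:ℝ)+1) * m.choose r = (m+1).choose (r+1) * (r+1) := by
      exact_mod_cast Nat.add_one_mul_choose_eq m r
    have he : 1 ≤ Real.exp 1 / Real.sqrt Real.pi := by
      rw [le_div_iff₀ (Real.sqrt_pos.mpr Real.pi_pos), one_mul]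
      have : Real.sqrt Real.pi ≤ 2 := by
        rw [Real.sqrt_le_left (by norm_num)]; have := Real.pi_le_four; linarith
      have := Real.add_one_le_exp (1:ℝ)
      linarith
    have h3 : x * (m.choose r * x ^ r * (1 - x) ^ (m - r)) * m ≤ r + 1 := by
      calc x * (m.choose r * x ^ r * (1 - x) ^ (m - r)) * m
          ≤ x * (m.choose r * x ^ r * (1 - x) ^ (m - r)) * (m + 1) := by gcongr; linarith
        _ = (((m:ℝ)+1) * m.choose r) * x^(r+1) * (1-x)^(m-r) := by ring
        _ = (((m+1).choose (r+1) : ℝ) * x ^ (r+1) * (1-x)^(m - r)) * (r+1) := by rw [hc]; ring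
        _ ≤ 1 * (r+1) := by gcongr
        _ = r + 1 := one_mul _
    rw [mul_one_div, le_div_iff₀ hm']
    calc _ ≤ (r:ℝ) + 1 := h3
      _ ≤ (Real.exp 1 / Real.sqrt Real.pi) * (r + 1) := le_mul_of_one_le_left (by positivity) he
      _ = _ := by ring

lemma const_bound (α : ℝ) (hα : α ∈ Set.Icc (0 : ℝ) 1) (r : ℕ) :
    2 * ((r:ℝ)+1) * 2 ^ ((r:ℝ)+1-α) ≤ 4 ^ (r+1) * (1 + r : ℝ) ^ (1 + r - α) := by
  have h1 : (2:ℝ) ^ ((r:ℝ)+1-α) ≤ 2 ^ (r+1) := by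
    rw [← Real.rpow_natCast]
    apply Real.rpow_le_rpow_of_exponent_le (by norm_num)
    push_cast; linarith [hα.1]
  have h2 : (2:ℝ) ≤ 2 ^ (r+1) := by
    rw [pow_succ]; have := one_le_pow₀ (show (1:ℝ) ≤ 2 by norm_num) (n := r); linarith
  have h3 : (r:ℝ) + 1 ≤ (1 + r : ℝ) ^ (1 + r - α) := by
    rcases Nat.eq_zero_or_pos r with h | h
    · subst h; simp
    · have : (1:ℝ) ≤ r := by exact_mod_cast h
      calc (r:ℝ) + 1 = (1 + r : ℝ) ^ (1:ℝ) := by rw [Real.rpow_one]; ring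
        _ ≤ _ := Real.rpow_le_rpow_of_exponent_le (by linarith) (by linarith [hα.2])
  have h4 : (4:ℝ) ^ (r+1) = 2 ^ (r+1) * 2 ^ (r+1) := by rw [← mul_pow]; norm_num
  rw [h4]
  calc 2 * ((r:ℝ)+1) * 2 ^ ((r:ℝ)+1-α) = (2 * 2 ^ ((r:ℝ)+1-α)) * (r+1) := by ring
    _ ≤ _ := by gcongr

lemma iid_bound_s11 {A : Type*} (p : A → ℕ → ℝ≥0∞) (a : A) (hp : ∑' k, p a k = 1)
    (α : ℝ) (hα : α ∈ Set.Icc (0 : ℝ) 1)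
    (ℓ : ℝ → ℝ) (hmono : AntitoneOn ℓ (Set.Ioi 0)) (hpos : ∀ x, 0 < x → 0 < ℓ x)
    (hν : ∀ ε : ℝ, ε ∈ Set.Ioc (0 : ℝ) 1 →
      nuCount p a ε ≤ ENNReal.ofReal (ε ^ (-α) * ℓ (1 / ε)))
    (m r : ℕ) (hrm : r < m) :
    ∑' j, p a j * (m.choose r * p a j ^ r * (1 - p a j) ^ (m - r)) ≤
      cOne α r * ENNReal.ofReal ((m:ℝ) ^ (-(1-α)) * ℓ m) := by
  classical
  have hm : 0 < m := by omega
  have hm' : (0:ℝ) < m := by exact_mod_cast hm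
  have hm1 : (1:ℝ) ≤ m := by exact_mod_cast hm
  have hℓ := hpos m hm'
  set G : ℕ → ℝ → ℝ≥0∞ := fun j s => ENNReal.ofReal ((m:ℝ)^r / r.factorial) * (ENNReal.ofReal ((r+1) * (2/m)^(r+1) * s ^ r) *
        (if ENNReal.ofReal (2 * s / m) ≤ p a j then 1 else 0)) with hG
  have hterm : ∀ j, p a j * (m.choose r * p a j ^ r * (1 - p a j) ^ (m - r)) ≤
      cDGP r * ENNReal.ofReal (1 / m) * (if ENNReal.ofReal (1/m) ≤ p a j then 1 else 0) +
      ∫⁻ s in Set.Ioc (0:ℝ) (1/2), G j s := by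
    intro j
    have hle : p a j ≤ 1 := hp ▸ ENNReal.le_tsum j
    obtain ⟨x, hx0, hx⟩ : ∃ x : ℝ, 0 ≤ x ∧ p a j = ENNReal.ofReal x :=
      ⟨(p a j).toReal, ENNReal.toReal_nonneg, (ENNReal.ofReal_toReal (ne_top_of_le_ne_top one_ne_top hle)).symm⟩
    have hx1 : x ≤ 1 := by
      rw [hx] at hle; simpa using hle
    have hy : 0 ≤ 1 - x := by linarith
    have e : p a j * (m.choose r * p a j ^ r * (1 - p a j) ^ (m - r)) =
        ENNReal.ofReal (x * (m.choose r * x ^ r * (1 - x) ^ (m - r))) := by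
      rw [hx, ENNReal.ofReal_mul hx0, ENNReal.ofReal_mul (by positivity), ENNReal.ofReal_mul (by positivity),
        ENNReal.ofReal_pow hx0, ENNReal.ofReal_pow hy, ENNReal.ofReal_natCast, ENNReal.ofReal_sub _ hx0, ENNReal.ofReal_one]
    rw [e]
    split_ifs with hc
    · rw [mul_one]
      exact (big_term m r hrm x hx0 hx1).trans le_self_add
    · rw [mul_zero, zero_add, hG]
      have hxm : x ≤ 1 / m := by
        by_contra hcon
        push Not at hcon
        exact hc (hx ▸ ENNReal.ofReal_le_ofReal hcon.le)
      simp only [hx]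
      rw [lintegral_const_mul' _ _ ENNReal.ofReal_ne_top]
      refine le_trans ?_ (mul_le_mul_right (layer m r hm x hx0 hxm) _)
      rw [← ENNReal.ofReal_mul (by positivity)]
      apply ENNReal.ofReal_le_ofReal
      have h1 : (m.choose r : ℝ) ≤ (m:ℝ)^r / r.factorial := Nat.choose_le_pow_div r m
      have h2 : (1-x)^(m-r) ≤ 1 := pow_le_one₀ hy (by linarith)
      calc x * (m.choose r * x ^ r * (1 - x) ^ (m - r)) ≤ x * ((m:ℝ)^r / r.factorial * x ^ r * 1) := by gcongr
        _ = _ := by ring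
  refine (ENNReal.tsum_le_tsum hterm).trans ?_
  rw [ENNReal.tsum_add, ENNReal.tsum_mul_left, cOne, add_mul]
  refine add_le_add ?_ ?_
  · have h := hν (1/m) ⟨by positivity, by rw [div_le_one hm']; exact hm1⟩
    rw [nuCount] at h
    refine (mul_le_mul_right h _).trans ?_
    rw [mul_assoc, ← ENNReal.ofReal_mul (by positivity)]
    refine mul_le_mul_right (ENNReal.ofReal_le_ofReal (le_of_eq ?_)) _
    rw [one_div_one_div, one_div, Real.inv_rpow hm'.le, Real.rpow_neg hm'.le, inv_inv,
      show -(1-α) = -1 + α by ring, Real.rpow_add hm', Real.rpow_neg_one, mul_assoc]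
  · rw [← lintegral_tsum]
    swap
    · intro j
      apply Measurable.aemeasurable
      apply Measurable.const_mul
      apply Measurable.mul (by fun_prop)
      apply Measurable.ite _ measurable_const measurable_const
      exact measurableSet_le (by fun_prop) measurable_const
    have hKK : 0 ≤ (4:ℝ) ^ (r+1) / r.factorial * (1 + r : ℝ) ^ (1 + r - α) * ((m:ℝ) ^ (-(1-α)) * ℓ m) := by positivity
    have hK : (4 ^ (r + 1) / (r.factorial : ℝ≥0∞)) *
        ENNReal.ofReal ((1 + r : ℝ) ^ (1 + r - α)) * ENNReal.ofReal ((m:ℝ) ^ (-(1-α)) * ℓ m) =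
        ENNReal.ofReal ((4:ℝ) ^ (r+1) / r.factorial * (1 + r : ℝ) ^ (1 + r - α) * ((m:ℝ) ^ (-(1-α)) * ℓ m)) := by
      rw [ENNReal.ofReal_mul (p := (4:ℝ) ^ (r+1) / r.factorial * (1 + r : ℝ) ^ (1 + r - α)) (by positivity),
        ENNReal.ofReal_mul (p := (4:ℝ) ^ (r+1) / r.factorial) (by positivity),
        ENNReal.ofReal_div_of_pos (by positivity), ENNReal.ofReal_pow (by norm_num), ENNReal.ofReal_natCast]
      simp
    rw [mul_right_comm, hK, lowerGammaE, ← lintegral_const_mul' _ _ ENNReal.ofReal_ne_top]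
    apply setLIntegral_mono' measurableSet_Ioc
    intro s hs
    have hs0 := hs.1
    have hs2 := hs.2
    simp only [hG, ENNReal.tsum_mul_left]
    have hε0 : 0 < 2 * s / m := by positivity
    have hε1 : 2 * s / m ≤ 1 / m := by gcongr; linarith
    have h := hν (2 * s / m) ⟨hε0, hε1.trans (by rw [div_le_one hm']; exact hm1)⟩
    rw [nuCount] at h
    have hℓm : ℓ (1 / (2 * s / m)) ≤ ℓ m := by
      apply hmono hm' (Set.mem_Ioi.mpr (by positivity))
      rw [le_div_iff₀ hε0]
      rw [mul_div_assoc', div_le_iff₀ hm']; nlinarith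
    refine (mul_le_mul_right (mul_le_mul_right (h.trans (ENNReal.ofReal_le_ofReal (mul_le_mul_of_nonneg_left hℓm (by positivity)))) _) _).trans ?_
    rw [← ENNReal.ofReal_mul (by positivity), ← ENNReal.ofReal_mul (by positivity), ← ENNReal.ofReal_mul hKK]
    apply ENNReal.ofReal_le_ofReal
    have hexp : 1 ≤ 2 * Real.exp (-s) := by
      have := Real.add_one_le_exp (-s); linarith
    have e1 : (2 * s / m : ℝ) ^ (-α) = 2 ^ (-α) * s ^ (-α) * (m:ℝ) ^ α := by
      rw [Real.div_rpow (by positivity) hm'.le, Real.mul_rpow (by norm_num) hs0.le, Real.rpow_neg hm'.le, div_inv_eq_mul]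
    have e2 : s ^ (1 + (r:ℝ) - α - 1) = s ^ r * s ^ (-α) := by
      rw [← Real.rpow_natCast, ← Real.rpow_add hs0]; congr 1; ring
    have e3 : (m:ℝ) ^ (-(1-α)) = (m:ℝ)⁻¹ * (m:ℝ) ^ α := by
      rw [show -(1-α) = -1 + α by ring, Real.rpow_add hm', Real.rpow_neg_one]
    have e4 : (2:ℝ) ^ ((r:ℝ)+1-α) = 2 ^ (r+1) * 2 ^ (-α) := by
      rw [← Real.rpow_natCast, ← Real.rpow_add (by norm_num)]; congr 1; push_cast; ring
    have hcb := const_bound α hα r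
    rw [e4] at hcb
    rw [e1, e2, e3]
    set D := s ^ r * s ^ (-α) * ((m:ℝ)⁻¹ * (m:ℝ) ^ α * ℓ m) / r.factorial with hD
    have hD0 : 0 ≤ D := by positivity
    calc (m:ℝ) ^ r / r.factorial * ((r + 1) * (2 / m) ^ (r + 1) * s ^ r * (2 ^ (-α) * s ^ (-α) * (m:ℝ) ^ α * ℓ m))
        = (((r:ℝ)+1) * (2 ^ (r+1) * 2 ^ (-α))) * D := by
          rw [hD, div_pow, pow_succ (m:ℝ) r]; field_simp
      _ ≤ (((r:ℝ)+1) * (2 ^ (r+1) * 2 ^ (-α))) * D * (2 * Real.exp (-s)) := le_mul_of_one_le_right (by positivity) hexp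
      _ = (2 * ((r:ℝ)+1) * (2 ^ (r+1) * 2 ^ (-α))) * (D * Real.exp (-s)) := by ring
      _ ≤ (4 ^ (r+1) * (1 + r : ℝ) ^ (1 + r - α)) * (D * Real.exp (-s)) := by gcongr
      _ = _ := by rw [hD]; ring

lemma diag_bound {A : Type*} (p : A → ℕ → ℝ≥0∞) (a : A) (hp : ∑' k, p a k = 1)
    (α : ℝ) (ℓ : ℝ → ℝ)
    (hν : ∀ ε : ℝ, ε ∈ Set.Ioc (0 : ℝ) 1 →
      nuCount p a ε ≤ ENNReal.ofReal (ε ^ (-α) * ℓ (1 / ε)))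
    (r : ℕ) :
    ∑' j, p a j * p a j ^ r ≤ cTwo α r ℓ (⨆ a : A, ⨆ k : ℕ, p a k) := by
  classical
  have hle : ∀ j, p a j ≤ 1 := fun j => hp ▸ ENNReal.le_tsum j
  have h1 : ∑' j, p a j * p a j ^ r ≤ 1 := by
    rw [← hp]
    apply ENNReal.tsum_le_tsum
    intro j
    exact mul_le_of_le_one_right' (pow_le_one' (hle j) r)
  unfold cTwo
  split_ifs with h0
  · exact h1
  refine le_min h1 ?_
  have hr' : (0:ℝ) < r := by exact_mod_cast Nat.pos_of_ne_zero h0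
  have hr1 : (1:ℝ) ≤ r := by exact_mod_cast Nat.pos_of_ne_zero h0
  set M := ⨆ a : A, ⨆ k : ℕ, p a k with hM
  have hterm : ∀ j, p a j * p a j ^ r ≤ M ^ (r+1) * (if ENNReal.ofReal (1/r) ≤ p a j then 1 else 0) + p a j * ENNReal.ofReal ((r : ℝ) ^ (-(r : ℝ))) := by
    intro j
    have hjM : p a j ≤ M := (le_iSup (fun k => p a k) j).trans (le_iSup (fun a => ⨆ k, p a k) a)
    split_ifs with hc
    · rw [mul_one, ← pow_succ']
      exact (pow_le_pow_left' hjM _).trans le_self_add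
    · rw [mul_zero, zero_add]
      gcongr
      push Not at hc
      refine (pow_le_pow_left' hc.le _).trans ?_
      rw [← ENNReal.ofReal_pow (by positivity)]
      apply le_of_eq
      rw [Real.rpow_neg hr'.le, Real.rpow_natCast, one_div, inv_pow]
  refine (ENNReal.tsum_le_tsum hterm).trans ?_
  rw [ENNReal.tsum_add, ENNReal.tsum_mul_left, ENNReal.tsum_mul_right, hp, one_mul]
  gcongr
  have h := hν (1/r) ⟨by positivity, by rw [div_le_one hr']; exact hr1⟩
  rw [nuCount] at h
  refine h.trans (le_of_eq ?_)
  rw [one_div_one_div, one_div, Real.inv_rpow hr'.le, Real.rpow_neg hr'.le, inv_inv]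

lemma ell_pos {A : Type*} (p : A → ℕ → ℝ≥0∞) (a : A) (hp : ∑' k, p a k = 1)
    (α : ℝ) (ℓ : ℝ → ℝ) (hmono : AntitoneOn ℓ (Set.Ioi 0))
    (hν : ∀ ε : ℝ, ε ∈ Set.Ioc (0 : ℝ) 1 →
      nuCount p a ε ≤ ENNReal.ofReal (ε ^ (-α) * ℓ (1 / ε))) (x : ℝ) (hx : 0 < x) : 0 < ℓ x := by
  obtain ⟨j, hj⟩ : ∃ j, p a j ≠ 0 := by
    by_contra h
    push Not at h
    simp [h] at hp
  have hle : p a j ≤ 1 := hp ▸ ENNReal.le_tsum j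
  have hjt : p a j ≠ ⊤ := ne_top_of_le_ne_top one_ne_top hle
  set q := (p a j).toReal
  have hq : 0 < q := ENNReal.toReal_pos hj hjt
  have hq1 : q ≤ 1 := ENNReal.toReal_le_of_le_ofReal zero_le_one (by simpa using hle)
  set ε := min q (1/x)
  have hε : 0 < ε := lt_min hq (by positivity)
  have h := hν ε ⟨hε, (min_le_left _ _).trans hq1⟩
  have h1 : 1 ≤ nuCount p a ε := by
    classical
    refine le_trans ?_ (ENNReal.le_tsum j)
    rw [if_pos]
    exact ENNReal.ofReal_le_of_le_toReal (min_le_left _ _)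
  have h2 : 0 < ENNReal.ofReal (ε ^ (-α) * ℓ (1 / ε)) := lt_of_lt_of_le zero_lt_one (h1.trans h)
  rw [ENNReal.ofReal_pos] at h2
  have h3 : 0 < ℓ (1/ε) := (pos_iff_pos_of_mul_pos h2).mp (by positivity)
  refine h3.trans_le (hmono (Set.mem_Ioi.mpr hx) (Set.mem_Ioi.mpr (by positivity)) ?_)
  rw [le_div_iff₀ hε]
  have := min_le_right q (1/x)
  calc x * ε ≤ x * (1/x) := by gcongr; 
    _ = 1 := by field_simp

lemma nullMeas_of_compl {Ω : Type*} [MeasurableSpace Ω] (P : Measure Ω) [IsProbabilityMeasure P]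
    (S : Set Ω) (h : P S + P Sᶜ ≤ 1) : NullMeasurableSet S P := by
  have hM := measurableSet_toMeasurable P S
  have hM' := measurableSet_toMeasurable P Sᶜ
  have hs : S ⊆ toMeasurable P S := subset_toMeasurable P S
  have hs' : (toMeasurable P Sᶜ)ᶜ ⊆ S := by
    rw [Set.compl_subset_comm]; exact subset_toMeasurable P Sᶜ
  have hle : P (toMeasurable P S) ≤ P (toMeasurable P Sᶜ)ᶜ := by
    rw [prob_compl_eq_one_sub hM', measure_toMeasurable, measure_toMeasurable]
    exact ENNReal.le_sub_of_add_le_right (measure_ne_top _ _) h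
  have hae : ((toMeasurable P Sᶜ)ᶜ : Set Ω) =ᵐ[P] toMeasurable P S :=
    ae_eq_of_subset_of_measure_ge (hs'.trans hs) hle hM'.compl.nullMeasurableSet
      (measure_ne_top _ _)
  refine (hM.nullMeasurableSet (μ := P)).congr ?_
  filter_upwards [hae] with ω hω
  have h1 : (ω ∈ (toMeasurable P Sᶜ)ᶜ) = (ω ∈ toMeasurable P S) := hω
  apply propext
  constructor
  · intro h; exact hs' (h1.mpr h)
  · intro h; exact hs h

lemma tsum_ite_split {T : Type*} [DecidableEq T] (f : T → ℝ≥0∞) (t : T) :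
    ∑' s, f s = f t + ∑' s, (if s = t then 0 else f s) := by
  have h : ∀ s, f s = (if s = t then f t else 0) + (if s = t then 0 else f s) := by
    intro s; split_ifs with h <;> simp [h]
  calc ∑' s, f s = ∑' s, ((if s = t then f t else 0) + (if s = t then 0 else f s)) :=
        tsum_congr h
    _ = _ := by rw [ENNReal.tsum_add, tsum_ite_eq]

lemma aemeas_disc {Ω T : Type*} [MeasurableSpace Ω] (P : Measure Ω) [IsProbabilityMeasure P]
    [Countable T] [MeasurableSpace T] [MeasurableSingletonClass T] (W : Ω → T)
    (hsum : ∑' t, P (W ⁻¹' {t}) = 1) : AEMeasurable W P := by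
  have hnull : ∀ t, NullMeasurableSet (W ⁻¹' {t}) P := by
    intro t
    apply nullMeas_of_compl
    classical
    rw [← hsum, tsum_ite_split _ t]
    gcongr
    calc P (W ⁻¹' {t})ᶜ ≤ P (⋃ s, if s = t then ∅ else W ⁻¹' {s}) := by
          apply measure_mono
          intro ω hω
          rw [Set.mem_iUnion]
          refine ⟨W ω, ?_⟩
          have : W ω ≠ t := hω
          simp [this]
      _ ≤ ∑' s, P (if s = t then ∅ else W ⁻¹' {s}) := measure_iUnion_le _
      _ = _ := by
          congr 1; ext s; split_ifs <;> simp
  apply NullMeasurable.aemeasurable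
  intro S _
  have : W ⁻¹' S = ⋃ t ∈ S, W ⁻¹' {t} := by ext; simp
  rw [this]
  exact NullMeasurableSet.biUnion (Set.to_countable S) (fun t _ => hnull t)

lemma disc_lintegral {Ω T : Type*} [MeasurableSpace Ω] (P : Measure Ω) [IsProbabilityMeasure P]
    [Countable T] (W : Ω → T)
    (hsum : ∑' t, P (W ⁻¹' {t}) = 1) (f : T → ℝ≥0∞) :
    ∫⁻ ω, f (W ω) ∂P = ∑' t, P (W ⁻¹' {t}) * f t := by
  let _ : MeasurableSpace T := ⊤
  have hW := aemeas_disc P W hsum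
  rw [← lintegral_map' (f := f) (Measurable.of_discrete).aemeasurable hW, lintegral_countable']
  congr 1; ext t
  rw [Measure.map_apply_of_aemeasurable hW (MeasurableSet.singleton t), mul_comm]

lemma disc_measure {Ω T : Type*} [MeasurableSpace Ω] (P : Measure Ω) [IsProbabilityMeasure P]
    [Countable T] (W : Ω → T)
    (hsum : ∑' t, P (W ⁻¹' {t}) = 1) (S : T → Prop) [DecidablePred S] :
    P {ω | S (W ω)} = ∑' t, P (W ⁻¹' {t}) * (if S t then 1 else 0) := by
  let _ : MeasurableSpace T := ⊤
  have hW := aemeas_disc P W hsum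
  rw [← disc_lintegral P W hsum, ← lintegral_map' (f := fun t => if S t then 1 else 0) (Measurable.of_discrete).aemeasurable hW]
  have : (fun t => if S t then (1:ℝ≥0∞) else 0) = Set.indicator {t | S t} 1 := by
    ext t; simp [Set.indicator]
  rw [this, lintegral_indicator_one (MeasurableSet.of_discrete), Measure.map_apply_of_aemeasurable hW (MeasurableSet.of_discrete)]
  rfl

lemma tsum_pi_cons {N : ℕ} {B : Type*} (F : (Fin (N+1) → B) → ℝ≥0∞) :
    ∑' k, F k = ∑' k0, ∑' k' : Fin N → B, F (Fin.cons k0 k') := by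
  rw [← (Fin.consEquiv (fun _ : Fin (N+1) => B)).tsum_eq]
  exact ENNReal.tsum_prod (f := fun a b => F (Fin.cons a b))

lemma tsum_pi_snoc {N : ℕ} {B : Type*} (F : (Fin (N+1) → B) → ℝ≥0∞) :
    ∑' k, F k = ∑' k0, ∑' k' : Fin N → B, F (Fin.snoc k' k0) := by
  rw [← (Fin.snocEquiv (fun _ : Fin (N+1) => B)).tsum_eq]
  exact ENNReal.tsum_prod (f := fun a b => F (Fin.snoc b a))

lemma tsum_prod_one {N : ℕ} (q : Fin N → ℕ → ℝ≥0∞) (hq : ∀ i, ∑' k, q i k = 1) :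
    ∑' k : Fin N → ℕ, ∏ i, q i (k i) = 1 := by
  induction N with
  | zero => simp [tsum_fintype]
  | succ N ih =>
    rw [tsum_pi_cons]
    simp only [Fin.prod_univ_succ, Fin.cons_zero, Fin.cons_succ, ENNReal.tsum_mul_left]
    rw [ih (fun i => q i.succ) (fun i => hq _)]
    simp [hq]

lemma binom_tsum {N : ℕ} (b : Fin N → Prop) [DecidablePred b] (q : Fin N → ℕ → ℝ≥0∞)
    (hq : ∀ i, ∑' k, q i k = 1) (j : ℕ) (x y : ℝ≥0∞) (hxy : x + y = 1)
    (hb : ∀ i, b i → q i j = x) (r : ℕ) :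
    ∑' k : Fin N → ℕ, (∏ i, q i (k i)) *
      (if (∑ i, if b i ∧ k i = j then 1 else 0 : ℕ) = r then 1 else 0) =
      ((∑ i, if b i then 1 else 0 : ℕ).choose r : ℝ≥0∞) * x ^ r *
        y ^ ((∑ i, if b i then 1 else 0 : ℕ) - r) := by
  induction N generalizing r with
  | zero => 
    cases r <;> simp [tsum_fintype]
  | succ N ih =>
    rw [tsum_pi_cons]
    simp only [Fin.prod_univ_succ, Fin.sum_univ_succ, Fin.cons_zero, Fin.cons_succ, mul_assoc,
      ENNReal.tsum_mul_left]
    have IH := fun r => ih (fun i => b i.succ) (fun i => q i.succ) (fun i => hq _)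
      (fun i hi => hb _ hi) r
    set m := (∑ i : Fin N, if b i.succ then 1 else 0 : ℕ) with hm
    by_cases h0 : b 0
    · have hy : ∑' k, (if k = j then 0 else q 0 k) = y := by
        have := hq 0
        rw [tsum_ite_split _ j, hb 0 h0, ← hxy] at this
        refine (ENNReal.add_right_inj ?_).mp this
        rintro rfl; simp at hxy
      rw [tsum_ite_split _ j, hb 0 h0]
      have h2 : ∑' k, (if k = j then 0 else q 0 k * ∑' k' : Fin N → ℕ, (∏ i, q i.succ (k' i)) *
          (if ((if b 0 ∧ k = j then 1 else 0) + ∑ i : Fin N, if b i.succ ∧ k' i = j then 1 else 0 : ℕ) = r then 1 else 0)) = y * ((m.choose r : ℝ≥0∞) * x ^ r * y ^ (m - r)) := by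
        rw [← hy, ← ENNReal.tsum_mul_right]
        congr 1; ext k
        by_cases hk : k = j
        · simp [hk]
        · simp only [hk, and_false, if_false, zero_add]
          rw [IH, hy]
      rw [h2]
      simp only [h0, and_self, if_true, true_and]
      cases r with
      | zero =>
        have : ∀ s : ℕ, ¬ (1 + s = 0) := by intro s; omega
        simp [this]
        ring
      | succ r =>
        have : ∀ s : ℕ, (1 + s = r + 1) = (s = r) := by intro s; apply propext; omega
        simp only [this, IH]
        rw [add_comm 1 m, Nat.choose_succ_succ, Nat.add_sub_add_right]
        rcases lt_or_ge r m with h | h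
        · have e : m - r = (m - (r+1)) + 1 := by omega
          rw [e]; push_cast; ring
        · rw [Nat.choose_eq_zero_of_lt (show m < r + 1 by omega)]
          simp; ring
    · simp only [h0, false_and, if_false, zero_add, IH, ENNReal.tsum_mul_right, hq]
      ring

/-- extend a finite word -/
def extSeq {A : Type*} (a0 : A) {N : ℕ} (a : Fin N → A) (i : ℕ) : A :=
  if h : i < N then a ⟨i, h⟩ else a0

lemma extSeq_coe {A : Type*} (a0 : A) {N : ℕ} (a : Fin N → A) (i : Fin N) :
    extSeq a0 a i = a i := dif_pos i.2

lemma extSeq_snoc_lt {A : Type*} (a0 : A) {N : ℕ} (a : Fin N → A) (b : A) (i : ℕ) (h : i < N) :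
    extSeq a0 (Fin.snoc a b : Fin (N+1) → A) i = extSeq a0 a i := by
  simp [extSeq, h, Nat.lt_succ_of_lt h, Fin.snoc]

lemma extSeq_snoc_last {A : Type*} (a0 : A) {N : ℕ} (a : Fin N → A) (b : A) :
    extSeq a0 (Fin.snoc a b : Fin (N+1) → A) N = b := by
  simp [extSeq, Fin.snoc]

lemma tsum_R {A : Type*} (a0 : A) (R : ℕ → (ℕ → A) → A → ℝ≥0∞)
    (hRdep : ∀ (n : ℕ) (a a' : ℕ → A), (∀ i < n, a i = a' i) → R n a = R n a')
    (hRsum : ∀ (n : ℕ) (a : ℕ → A), ∑' b, R n a b = 1) (N : ℕ) :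
    ∑' a : Fin N → A, ∏ i ∈ Finset.range N, R i (extSeq a0 a) (extSeq a0 a i) = 1 := by
  induction N with
  | zero => simp [tsum_fintype]
  | succ N ih =>
    rw [tsum_pi_snoc, ENNReal.tsum_comm, ← ih]
    congr 1; ext a
    have : ∀ b, ∏ i ∈ Finset.range (N+1), R i (extSeq a0 (Fin.snoc a b : Fin (N+1) → A)) (extSeq a0 (Fin.snoc a b : Fin (N+1) → A) i) = (∏ i ∈ Finset.range N, R i (extSeq a0 a) (extSeq a0 a i)) * R N (extSeq a0 a) b := by
      intro b
      rw [Finset.prod_range_succ, extSeq_snoc_last,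
        hRdep N _ (extSeq a0 a) (fun i hi => extSeq_snoc_lt a0 a b i hi)]
      congr 1
      apply Finset.prod_congr rfl
      intro i hi
      have hi := Finset.mem_range.mp hi
      rw [extSeq_snoc_lt a0 a b i hi,
        hRdep i _ (extSeq a0 a) (fun i' hi' => extSeq_snoc_lt a0 a b i' (hi'.trans hi))]
    simp only [this, ENNReal.tsum_mul_left, hRsum, mul_one]

lemma fixed_word_bound {A : Type*} [DecidableEq A] (p : A → ℕ → ℝ≥0∞) (hp : ∀ a, ∑' k, p a k = 1)
    (α : ℝ) (hα : α ∈ Set.Icc (0 : ℝ) 1)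
    (ℓ : ℝ → ℝ) (hmono : AntitoneOn ℓ (Set.Ioi 0)) (hpos : ∀ x, 0 < x → 0 < ℓ x)
    (hν : ∀ a : A, ∀ ε : ℝ, ε ∈ Set.Ioc (0 : ℝ) 1 →
      nuCount p a ε ≤ ENNReal.ofReal (ε ^ (-α) * ℓ (1 / ε)))
    (n r : ℕ) (a : Fin (n+1) → A) (m : ℕ)
    (hm : m = (∑ i : Fin n, if a i.castSucc = a (Fin.last n) then 1 else 0 : ℕ)) :
    ∑' k : Fin (n+1) → ℕ, (∏ i, p (a i) (k i)) *
      (if (∑ i : Fin n, if a i.castSucc = a (Fin.last n) ∧ k i.castSucc = k (Fin.last n)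
        then 1 else 0 : ℕ) = r then 1 else 0) ≤
      cOne α r * (if r < m then ENNReal.ofReal ((m:ℝ) ^ (-(1-α)) * ℓ m) else 0) +
      cTwo α r ℓ (⨆ a : A, ⨆ k : ℕ, p a k) * (if m = r then 1 else 0) := by
  have key : ∑' k : Fin (n+1) → ℕ, (∏ i, p (a i) (k i)) *
      (if (∑ i : Fin n, if a i.castSucc = a (Fin.last n) ∧ k i.castSucc = k (Fin.last n)
        then 1 else 0 : ℕ) = r then 1 else 0) =
      ∑' j, p (a (Fin.last n)) j * (m.choose r * p (a (Fin.last n)) j ^ r *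
        (1 - p (a (Fin.last n)) j) ^ (m - r)) := by
    rw [tsum_pi_snoc]
    apply tsum_congr
    intro j
    have hle : p (a (Fin.last n)) j ≤ 1 := hp (a (Fin.last n)) ▸ ENNReal.le_tsum j
    have := binom_tsum (fun i : Fin n => a i.castSucc = a (Fin.last n))
      (fun i => p (a i.castSucc)) (fun i => hp _) j (p (a (Fin.last n)) j)
      (1 - p (a (Fin.last n)) j) (add_tsub_cancel_of_le hle)
      (fun i hi => by simp only [hi]) r
    rw [hm, ← this, ← ENNReal.tsum_mul_left]
    apply tsum_congr
    intro k
    simp only [Fin.prod_univ_castSucc, Fin.snoc_castSucc, Fin.snoc_last]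
    ring
  rw [key]
  rcases lt_trichotomy r m with h | h | h
  · rw [if_pos h, if_neg (by omega), mul_zero, add_zero]
    exact iid_bound_s11 p _ (hp _) α hα ℓ hmono hpos (hν _) m r h
  · subst h
    simp only [lt_irrefl, if_false, if_true, mul_zero, mul_one, zero_add, Nat.choose_self,
      Nat.cast_one, one_mul, Nat.sub_self, pow_zero]
    exact diag_bound p _ (hp _) α ℓ (hν _) r
  · simp [Nat.choose_eq_zero_of_lt h]

/-- Proposition 4.1: in the regime switching model, if
`ν(a,ε) ≤ ε^{−α}ℓ(1/ε)` for all `a` and `ε ∈ (0,1]` with `α ∈ [0,1]` and `ℓ`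
non-increasing and slowly varying, then
`P{𝓛_n = r} ≤ c₁(α,r) E[1{L_n > r} L_n^{−(1−α)} ℓ(L_n)] + c₂(α,r) P{L_n = r}`,
with `p_∨ = sup p_{a,k}`. (Indexed from 0.) -/
theorem regime_switching_RV_bound {A : Type*} [Countable A] [DecidableEq A]
    {Ω : Type*} [MeasurableSpace Ω] (P : Measure Ω) [IsProbabilityMeasure P]
    (Z : ℕ → Ω → A × ℕ)
    (p : A → ℕ → ℝ≥0∞) (hp : ∀ a, ∑' k, p a k = 1)
    (R : ℕ → (ℕ → A) → A → ℝ≥0∞)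
    (hRdep : ∀ (n : ℕ) (a a' : ℕ → A), (∀ i < n, a i = a' i) → R n a = R n a')
    (hRsum : ∀ (n : ℕ) (a : ℕ → A), ∑' b, R n a b = 1)
    (hZ : ∀ (n : ℕ) (a : ℕ → A) (k : ℕ → ℕ),
      P (⋂ i ∈ Finset.range (n + 1), {ω | Z i ω = (a i, k i)}) =
        (∏ i ∈ Finset.range (n + 1), R i a (a i)) *
          ∏ i ∈ Finset.range (n + 1), p (a i) (k i))
    (α : ℝ) (hα : α ∈ Set.Icc (0 : ℝ) 1)
    (ℓ : ℝ → ℝ) (hsv : SlowlyVarying ℓ) (hmono : AntitoneOn ℓ (Set.Ioi 0))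
    (hν : ∀ a : A, ∀ ε : ℝ, ε ∈ Set.Ioc (0 : ℝ) 1 →
      nuCount p a ε ≤ ENNReal.ofReal (ε ^ (-α) * ℓ (1 / ε)))
    (n r : ℕ) (hn : 1 ≤ n) (hr : r ≤ n - 1) :
    P {ω | (∑ i ∈ Finset.range n, if Z i ω = Z n ω then 1 else 0 : ℕ) = r} ≤
      cOne α r * (∫⁻ ω,
          (if r < (∑ i ∈ Finset.range n, if (Z i ω).1 = (Z n ω).1 then 1 else 0 : ℕ) then
            ENNReal.ofReal
              (((∑ i ∈ Finset.range n, if (Z i ω).1 = (Z n ω).1 then 1 else 0 : ℕ) : ℝ)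
                  ^ (-(1 - α)) *
                ℓ ((∑ i ∈ Finset.range n, if (Z i ω).1 = (Z n ω).1 then 1 else 0 : ℕ) : ℝ))
          else 0) ∂P) +
        cTwo α r ℓ (⨆ a : A, ⨆ k : ℕ, p a k) *
          P {ω | (∑ i ∈ Finset.range n, if (Z i ω).1 = (Z n ω).1 then 1 else 0 : ℕ) = r} := by
  obtain ⟨ω0⟩ : Nonempty Ω := nonempty_of_isProbabilityMeasure P
  set a0 : A := (Z 0 ω0).1
  have hpos : ∀ x, 0 < x → 0 < ℓ x := fun x hx => ell_pos p a0 (hp a0) α ℓ hmono (hν a0) x hx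
  let W : Ω → (Fin (n+1) → A) × (Fin (n+1) → ℕ) :=
    fun ω => (fun i => (Z i ω).1, fun i => (Z i ω).2)
  let RR : (Fin (n+1) → A) → ℝ≥0∞ :=
    fun a => ∏ i ∈ Finset.range (n+1), R i (extSeq a0 a) (extSeq a0 a i)
  have hRR : ∑' a, RR a = 1 := tsum_R a0 R hRdep hRsum (n+1)
  have hW : ∀ a k, P (W ⁻¹' {(a, k)}) = RR a * ∏ i, p (a i) (k i) := by
    intro a k
    have h := hZ n (extSeq a0 a) (extSeq 0 k)
    have e1 : W ⁻¹' {(a, k)} =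
        ⋂ i ∈ Finset.range (n + 1), {ω | Z i ω = (extSeq a0 a i, extSeq 0 k i)} := by
      ext ω
      simp only [Set.mem_preimage, Set.mem_singleton_iff, Set.mem_iInter, Finset.mem_range,
        Set.mem_ofPred_eq, W, Prod.mk.injEq, funext_iff]
      constructor
      · rintro ⟨h1, h2⟩ i hi
        have h1 := h1 ⟨i, hi⟩
        have h2 := h2 ⟨i, hi⟩
        simp only at h1 h2
        simp only [extSeq, hi, dif_pos]
        rw [← h1, ← h2]
      · intro h
        constructor
        · intro i
          have := h i i.2
          simp only [this, extSeq_coe]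
        · intro i
          have := h i i.2
          simp only [this, extSeq_coe]
    rw [e1, h]
    congr 1
    rw [Finset.prod_range]
    apply Finset.prod_congr rfl
    intro i _
    simp only [extSeq_coe]
  have hsum : ∑' t, P (W ⁻¹' {t}) = 1 := by
    have e : ∀ t : (Fin (n+1) → A) × (Fin (n+1) → ℕ), P (W ⁻¹' {t}) =
        (fun a k => RR a * ∏ i, p (a i) (k i)) t.1 t.2 := fun t => hW t.1 t.2
    refine (tsum_congr e).trans ((ENNReal.tsum_prod (f := fun (a : Fin (n+1) → A) (k : Fin (n+1) → ℕ) =>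
      RR a * ∏ i, p (a i) (k i))).trans ?_)
    simp only [ENNReal.tsum_mul_left]
    rw [← hRR]
    apply tsum_congr
    intro a
    rw [tsum_prod_one (fun i => p (a i)) (fun i => hp _), mul_one]
  let LL : (Fin (n+1) → A) → ℕ := fun a =>
    ∑ i : Fin n, if a i.castSucc = a (Fin.last n) then 1 else 0
  let LZ : (Fin (n+1) → A) → (Fin (n+1) → ℕ) → ℕ := fun a k =>
    ∑ i : Fin n, if a i.castSucc = a (Fin.last n) ∧ k i.castSucc = k (Fin.last n) then 1 else 0
  have hLL : ∀ ω, (∑ i ∈ Finset.range n, if (Z i ω).1 = (Z n ω).1 then 1 else 0 : ℕ)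
      = LL (W ω).1 := by
    intro ω
    rw [Finset.sum_range]
    simp [LL, W]
  have hLZ : ∀ ω, (∑ i ∈ Finset.range n, if Z i ω = Z n ω then 1 else 0 : ℕ)
      = LZ (W ω).1 (W ω).2 := by
    intro ω
    rw [Finset.sum_range]
    simp [LZ, W, Prod.ext_iff]
  simp only [hLL, hLZ]
  have swap : ∀ F : (Fin (n+1) → A) → (Fin (n+1) → ℕ) → ℝ≥0∞,
      ∑' t : (Fin (n+1) → A) × (Fin (n+1) → ℕ), P (W ⁻¹' {t}) * F t.1 t.2 =
      ∑' a, RR a * ∑' k : Fin (n+1) → ℕ, (∏ i, p (a i) (k i)) * F a k := by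
    intro F
    have e : ∀ t : (Fin (n+1) → A) × (Fin (n+1) → ℕ), P (W ⁻¹' {t}) * F t.1 t.2 =
        (fun a k => RR a * ((∏ i, p (a i) (k i)) * F a k)) t.1 t.2 := by
      intro t
      rw [show t = (t.1, t.2) from rfl, hW]
      exact mul_assoc _ _ _
    refine (tsum_congr e).trans ((ENNReal.tsum_prod (f := fun (a : Fin (n+1) → A) (k : Fin (n+1) → ℕ) =>
      RR a * ((∏ i, p (a i) (k i)) * F a k))).trans ?_)
    simp only [ENNReal.tsum_mul_left]
  have swap' : ∀ F : (Fin (n+1) → A) → ℝ≥0∞,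
      ∑' t : (Fin (n+1) → A) × (Fin (n+1) → ℕ), P (W ⁻¹' {t}) * F t.1 =
      ∑' a, RR a * F a := by
    intro F
    rw [swap (fun a _ => F a)]
    apply tsum_congr
    intro a
    rw [ENNReal.tsum_mul_right, tsum_prod_one (fun i => p (a i)) (fun i => hp _), one_mul]
  rw [disc_measure P W hsum (fun t => LZ t.1 t.2 = r), disc_measure P W hsum (fun t => LL t.1 = r),
    disc_lintegral P W hsum (fun t => if r < LL t.1 then
      ENNReal.ofReal ((LL t.1 : ℝ) ^ (-(1 - α)) * ℓ (LL t.1 : ℝ)) else 0),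
    swap (fun a k => if LZ a k = r then 1 else 0), swap' (fun a => if LL a = r then 1 else 0),
    swap' (fun a => if r < LL a then
      ENNReal.ofReal ((LL a : ℝ) ^ (-(1 - α)) * ℓ (LL a : ℝ)) else 0),
    ← ENNReal.tsum_mul_left, ← ENNReal.tsum_mul_left, ← ENNReal.tsum_add]
  apply ENNReal.tsum_le_tsum
  intro a
  have hb := fixed_word_bound p hp α hα ℓ hmono hpos hν n r a (LL a) rfl
  refine (mul_le_mul_right hb (RR a)).trans (le_of_eq ?_)
  ring
end
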